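/- arXiv:1112.5248 — 5 statements merged into one kernel-verified Lean document; each statement's English description precedes it below -/
import Mathlib

section
/- Let T be a measure-preserving action of H₃(ℝ) on a standard probability space (X, ℬ, μ) such that the central flow (T_{c(t)})_{t∈ℝ} is mixing. Then T is mixing, i.e. μ(T_g A ∩ B) → μ(A)μ(B) as g → ∞ in H₃(ℝ) for all A, B ∈ ℬ. -/
open Filter Topology Pointwise

/-- The real Heisenberg group `H₃(ℝ)`: `⟨a, b, c⟩` encodes the upper unitriangular `3 × 3`
matrix with entry `a` at position `(1,2)`, `b` at position `(2,3)` and `c` at position `(1,3)`. -/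
@[ext] structure H3 : Type where
  a : ℝ
  b : ℝ
  c : ℝ

namespace H3

instance : Mul H3 := ⟨fun g h => ⟨g.a + h.a, g.b + h.b, g.c + h.c + g.a * h.b⟩⟩
instance : One H3 := ⟨⟨0, 0, 0⟩⟩
instance : Inv H3 := ⟨fun g => ⟨-g.a, -g.b, g.a * g.b - g.c⟩⟩

@[simp] lemma mul_a (g h : H3) : (g * h).a = g.a + h.a := rfl
@[simp] lemma mul_b (g h : H3) : (g * h).b = g.b + h.b := rfl
@[simp] lemma mul_c (g h : H3) : (g * h).c = g.c + h.c + g.a * h.b := rfl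
@[simp] lemma one_a : (1 : H3).a = 0 := rfl
@[simp] lemma one_b : (1 : H3).b = 0 := rfl
@[simp] lemma one_c : (1 : H3).c = 0 := rfl
@[simp] lemma inv_a (g : H3) : g⁻¹.a = -g.a := rfl
@[simp] lemma inv_b (g : H3) : g⁻¹.b = -g.b := rfl
@[simp] lemma inv_c (g : H3) : g⁻¹.c = g.a * g.b - g.c := rfl

instance : Group H3 where
  mul_assoc g h k := by ext <;> simp <;> ring
  one_mul g := by ext <;> simp
  mul_one g := by ext <;> simp
  inv_mul_cancel g := by ext <;> simp

def toProd (g : H3) : ℝ × ℝ × ℝ := (g.a, g.b, g.c)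
def ofProd (p : ℝ × ℝ × ℝ) : H3 := ⟨p.1, p.2.1, p.2.2⟩

/-- The natural (Euclidean) topology of `H₃(ℝ)`. -/
instance : TopologicalSpace H3 := TopologicalSpace.induced toProd inferInstance
/-- The Borel σ-algebra of `H₃(ℝ)`. -/
instance : MeasurableSpace H3 := MeasurableSpace.comap toProd inferInstance

/-- A Haar measure on `H₃(ℝ)` (Lebesgue measure in the upper-triangular coordinates);
it satisfies `haar (box α β γ) = 8αβγ`. -/
noncomputable def haar : MeasureTheory.Measure H3 :=
  MeasureTheory.Measure.map ofProd MeasureTheory.volume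

/-- The one-parameter subgroup `a(t)` (entry `t` at position `(1,2)`). -/
def A (t : ℝ) : H3 := ⟨t, 0, 0⟩
/-- The one-parameter subgroup `b(t)` (entry `t` at position `(2,3)`). -/
def B (t : ℝ) : H3 := ⟨0, t, 0⟩
/-- The central one-parameter subgroup `c(t)` (entry `t` at position `(1,3)`). -/
def C (t : ℝ) : H3 := ⟨0, 0, t⟩

/-- The flip automorphism `θ` of `H₃(ℝ)`: `θ(a(t)) = b(t)`, `θ(b(t)) = a(t)`, `θ(c(t)) = c(-t)`. -/
def flip (g : H3) : H3 := ⟨g.b, g.a, g.a * g.b - g.c⟩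

/-- The box `I(α,β,γ) = {c(t₃)b(t₂)a(t₁) : |t₁| ≤ α, |t₂| ≤ β, |t₃| ≤ γ}`. -/
def box (α β γ : ℝ) : Set H3 := {g : H3 | |g.a| ≤ α ∧ |g.b| ≤ β ∧ |g.c| ≤ γ}

end H3

/-- A (jointly measurable) measure-preserving action of the Heisenberg group `H₃(ℝ)`
by invertible measure-preserving transformations on a measure space `(X, μ)`. -/
structure H3System : Type 1 where
  X : Type
  [ms : MeasurableSpace X]
  μ : MeasureTheory.Measure X
  T : H3 → X → X
  t_one : ∀ x, T 1 x = x
  t_mul : ∀ g h x, T (g * h) x = T g (T h x)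
  t_meas : Measurable fun p : H3 × X => T p.1 p.2
  t_mp : ∀ g, MeasureTheory.MeasurePreserving (T g) μ μ

attribute [instance] H3System.ms

section BaseDefs

open MeasureTheory

variable {Y : Type*} [MeasurableSpace Y]

/-- Mixing for a family of measure-preserving maps indexed by `H₃(ℝ)`:
`ν (S g A ∩ B) → ν A · ν B` as `g → ∞`. -/
def MixingFam (ν : Measure Y) (S : H3 → Y → Y) : Prop :=
  ∀ A B : Set Y, MeasurableSet A → MeasurableSet B →
    Tendsto (fun g : H3 => ν (S g '' A ∩ B)) (cocompact H3) (𝓝 (ν A * ν B))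

/-- Mixing of order `l` (with `l+1` sets) for a family of maps indexed by `H₃(ℝ)`. -/
def MixingOfOrderFam (ν : Measure Y) (S : H3 → Y → Y) (l : ℕ) : Prop :=
  ∀ ε : ℝ, 0 < ε → ∀ A : Fin (l + 1) → Set Y, (∀ i, MeasurableSet (A i)) →
    ∃ K : Set H3, IsCompact K ∧
      ∀ g : Fin (l + 1) → H3, (∀ i j, i ≠ j → g i * (g j)⁻¹ ∉ K) →
        |(ν (⋂ i, S (g i) '' A i)).toReal - ∏ i, (ν (A i)).toReal| < ε

/-- Mixing for a flow (a family of maps indexed by `ℝ`). -/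
def FlowMixingFam (ν : Measure Y) (S : ℝ → Y → Y) : Prop :=
  ∀ A B : Set Y, MeasurableSet A → MeasurableSet B →
    Tendsto (fun t : ℝ => ν (S t '' A ∩ B)) (cocompact ℝ) (𝓝 (ν A * ν B))

/-- Mixing of order `l` (with `l+1` sets) for a flow. -/
def FlowMixingOfOrderFam (ν : Measure Y) (S : ℝ → Y → Y) (l : ℕ) : Prop :=
  ∀ ε : ℝ, 0 < ε → ∀ A : Fin (l + 1) → Set Y, (∀ i, MeasurableSet (A i)) →
    ∃ K : Set ℝ, IsCompact K ∧
      ∀ t : Fin (l + 1) → ℝ, (∀ i j, i ≠ j → t i - t j ∉ K) →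
        |(ν (⋂ i, S (t i) '' A i)).toReal - ∏ i, (ν (A i)).toReal| < ε

namespace H3System

variable (s : H3System)

/-- `(X, ℬ, μ)` is a standard probability space. -/
def IsStdProb : Prop := StandardBorelSpace s.X ∧ IsProbabilityMeasure s.μ

/-- Freeness: for almost every point, only the identity fixes it. -/
def Free : Prop := ∀ᵐ x ∂s.μ, ∀ g : H3, s.T g x = x → g = 1

/-- Mixing of the whole `H₃(ℝ)`-action. -/
def Mixing : Prop := MixingFam s.μ s.T

/-- Mixing of the central flow `(T_{c(t)})_{t∈ℝ}`. -/
def CentralMixing : Prop := FlowMixingFam s.μ fun t => s.T (H3.C t)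

/-- Ergodicity of the central flow `(T_{c(t)})_{t∈ℝ}`. -/
def CentralErgodic : Prop :=
  ∀ A : Set s.X, MeasurableSet A → (∀ t : ℝ, s.T (H3.C t) ⁻¹' A = A) →
    s.μ A = 0 ∨ s.μ Aᶜ = 0

/-- Rigidity: some sequence `gₙ → ∞` satisfies `μ(T_{gₙ}A ∩ B) → μ(A ∩ B)`. -/
def Rigid : Prop :=
  ∃ g : ℕ → H3, Tendsto g atTop (cocompact H3) ∧
    ∀ A B : Set s.X, MeasurableSet A → MeasurableSet B →
      Tendsto (fun n => s.μ (s.T (g n) '' A ∩ B)) atTop (𝓝 (s.μ (A ∩ B)))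

/-- Weak mixing: the diagonal product action on `(X × X, μ × μ)` is ergodic. -/
def WeaklyMixing : Prop :=
  ∀ A : Set (s.X × s.X), MeasurableSet A →
    (∀ g : H3, (fun p : s.X × s.X => (s.T g p.1, s.T g p.2)) ⁻¹' A = A) →
    (s.μ.prod s.μ) A = 0 ∨ (s.μ.prod s.μ) Aᶜ = 0

/-- Zero type (mixing in infinite measure): `μ(T_g D₁ ∩ D₂) → 0` as `g → ∞`
for sets of finite measure. -/
def ZeroType : Prop :=
  ∀ D₁ D₂ : Set s.X, MeasurableSet D₁ → MeasurableSet D₂ → s.μ D₁ < ⊤ → s.μ D₂ < ⊤ →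
    Tendsto (fun g : H3 => s.μ (s.T g '' D₁ ∩ D₂)) (cocompact H3) (𝓝 0)

end H3System

/-- A (one-sided) Følner sequence of relatively compact subsets of positive finite
Haar measure in `H₃(ℝ)`. -/
def IsFolnerSeq (F : ℕ → Set H3) : Prop :=
  (∀ n, IsCompact (closure (F n)) ∧ 0 < H3.haar (F n) ∧ H3.haar (F n) < ⊤) ∧
  ∀ g : H3,
    Tendsto (fun n => H3.haar (symmDiff ((g * ·) '' F n) (F n)) / H3.haar (F n)) atTop (𝓝 0)

/-- A Rokhlin tower `(Y, f, F)` for the system `s`: `f : Y → F` is measurable and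
`f⁻¹(gH) = T_g f⁻¹(H)` for Borel `H ⊆ F` and `g` with `gH ⊆ F`. -/
def IsRokhlinTower (s : H3System) (Y : Set s.X) (f : s.X → H3) (F : Set H3) : Prop :=
  MeasurableSet Y ∧ Measurable f ∧ (∀ x ∈ Y, f x ∈ F) ∧
  ∀ (H : Set H3) (g : H3), MeasurableSet H → H ⊆ F → (g * ·) '' H ⊆ F →
    Y ∩ f ⁻¹' ((g * ·) '' H) = s.T g '' (Y ∩ f ⁻¹' H)

/-- Rank one along a given sequence `(Fₙ)`: there are Rokhlin towers `(Yₙ, fₙ, Fₙ)` such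
that every measurable set is approximated by unions of levels of the towers. -/
def RankOneAlong (s : H3System) (F : ℕ → Set H3) : Prop :=
  ∃ (Y : ℕ → Set s.X) (f : ℕ → s.X → H3),
    (∀ n, IsRokhlinTower s (Y n) (f n) (F n)) ∧
    ∀ Bset : Set s.X, MeasurableSet Bset →
      ∃ Hs : ℕ → Set H3, (∀ n, MeasurableSet (Hs n) ∧ Hs n ⊆ F n) ∧
        Tendsto (fun n => s.μ (symmDiff Bset (Y n ∩ (f n) ⁻¹' Hs n))) atTop (𝓝 0)

/-- Rank one: rank one along some Følner sequence. -/
def RankOne (s : H3System) : Prop := ∃ F : ℕ → Set H3, IsFolnerSeq F ∧ RankOneAlong s F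

section Joinings

variable (s : H3System) {ι : Type} (φ : ι → H3)

/-- A 2-fold self-joining of the sub-action `(T_{φ i})_{i∈ι}`: a measure on `X × X`,
invariant under the diagonal action, whose both marginals equal `μ`. -/
def IsSelfJoining2 (ν : Measure (s.X × s.X)) : Prop :=
  IsProbabilityMeasure ν ∧ ν.map Prod.fst = s.μ ∧ ν.map Prod.snd = s.μ ∧
  ∀ i : ι, MeasurePreserving (fun p : s.X × s.X => (s.T (φ i) p.1, s.T (φ i) p.2)) ν ν

/-- An ergodic 2-fold self-joining. -/
def IsErgodicSelfJoining2 (ν : Measure (s.X × s.X)) : Prop :=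
  IsSelfJoining2 s φ ν ∧
  ∀ A : Set (s.X × s.X), MeasurableSet A →
    (∀ i : ι, (fun p : s.X × s.X => (s.T (φ i) p.1, s.T (φ i) p.2)) ⁻¹' A = A) →
    ν A = 0 ∨ ν Aᶜ = 0

/-- The centralizer of the sub-action `(T_{φ i})_{i∈ι}`: invertible measure-preserving
transformations commuting (a.e.) with every `T_{φ i}`. -/
def InCentralizer (R : s.X → s.X) : Prop :=
  Measurable R ∧ MeasurePreserving R s.μ s.μ ∧
  (∃ R' : s.X → s.X, Measurable R' ∧ MeasurePreserving R' s.μ s.μ ∧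
    (∀ᵐ x ∂s.μ, R' (R x) = x) ∧ (∀ᵐ x ∂s.μ, R (R' x) = x)) ∧
  ∀ i : ι, ∀ᵐ x ∂s.μ, R (s.T (φ i) x) = s.T (φ i) (R x)

/-- The off-diagonal (graph) self-joining `μ_R` determined by `R`,
i.e. `μ_R(A × B) = μ(A ∩ R⁻¹B) = μ(RA ∩ B)`. -/
noncomputable def graphJoining (R : s.X → s.X) : Measure (s.X × s.X) :=
  s.μ.map fun x => (x, R x)

/-- 2-fold simplicity of the sub-action `(T_{φ i})_{i∈ι}`: every ergodic 2-fold
self-joining is either off-diagonal over the centralizer or product measure. -/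
def TwoFoldSimple : Prop :=
  ∀ ν : Measure (s.X × s.X), IsErgodicSelfJoining2 s φ ν →
    (∃ R : s.X → s.X, InCentralizer s φ R ∧ ν = graphJoining s R) ∨ ν = s.μ.prod s.μ

/-- An `l`-fold self-joining of the sub-action `(T_{φ i})_{i∈ι}`. -/
def IsSelfJoining (l : ℕ) (ν : Measure (Fin l → s.X)) : Prop :=
  IsProbabilityMeasure ν ∧ (∀ k : Fin l, ν.map (fun x => x k) = s.μ) ∧
  ∀ i : ι, MeasurePreserving (fun (x : Fin l → s.X) k => s.T (φ i) (x k)) ν ν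

/-- Simplicity: 2-fold simple, and for every `l ≥ 2` the only `l`-fold self-joining all of
whose pairwise 2-dimensional projections are `μ × μ` is the product measure. -/
def Simple : Prop :=
  TwoFoldSimple s φ ∧
  ∀ l : ℕ, 2 ≤ l → ∀ ν : Measure (Fin l → s.X), IsSelfJoining s φ l ν →
    (∀ j k : Fin l, j ≠ k → ν.map (fun x => (x j, x k)) = s.μ.prod s.μ) →
    ν = Measure.pi fun _ => s.μ

/-- The centralizer of the sub-action `(T_{φ i})_{i∈ι}` equals `{T_g : g ∈ H₃(ℝ)}`
(modulo null sets). -/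
def CentralizerEq : Prop :=
  ∀ R : s.X → s.X, InCentralizer s φ R ↔ ∃ g : H3, ∀ᵐ x ∂s.μ, R x = s.T g x

/-- Minimal self-joinings (MSJ) of the sub-action `(T_{φ i})_{i∈ι}`: simple, and the
centralizer consists of the transformations of the sub-action itself. -/
def HasMSJ : Prop :=
  Simple s φ ∧ ∀ R : s.X → s.X, InCentralizer s φ R → ∃ i : ι, ∀ᵐ x ∂s.μ, R x = s.T (φ i) x

end Joinings

end BaseDefs

section Helpers
open MeasureTheory

/-- Commutator trick: decay along `φ g → ∞`. -/
lemma aux_comm {E : Type*} [NormedAddCommGroup E] [InnerProductSpace ℝ E]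
    (U : H3 →* (E →ₗᵢ[ℝ] E)) (f e : E)
    (H : ℝ → H3) (φ : H3 → ℝ)
    (hcomm : ∀ g τ, g * H τ = H τ * g * H3.C (φ g * τ))
    (hf : Tendsto (fun τ => U (H τ) f) (𝓝 0) (𝓝 f))
    (he : Tendsto (fun τ => U (H τ) e) (𝓝 0) (𝓝 e))
    (hmix : Tendsto (fun t => inner ℝ (U (H3.C t) f) f) (cocompact ℝ) (𝓝 0))
    (l : Filter H3) (hl : Tendsto φ l (cocompact ℝ)) :
    Tendsto (fun g => inner ℝ (U g f) e) l (𝓝 0) := by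
  rw [Metric.tendsto_nhds]
  intro ε hε
  set M : ℝ := ‖f‖ + ‖e‖ + 1 with hM
  have hMpos : 0 < M := by positivity
  set η : ℝ := ε / (4 * M) with hη
  have hηpos : 0 < η := by positivity
  obtain ⟨K, hK⟩ := exists_nat_gt ((‖f‖ ^ 2 + 1) / η ^ 2)
  have hKpos : (0 : ℝ) < K := lt_of_le_of_lt (by positivity) hK
  have h1 : ∀ᶠ τ in 𝓝 (0 : ℝ), dist (U (H τ) f) f < η ∧ dist (U (H τ) e) e < η :=
    ((Metric.tendsto_nhds.1 hf) η hηpos).and ((Metric.tendsto_nhds.1 he) η hηpos)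
  obtain ⟨δ, hδ, hδ'⟩ := Metric.eventually_nhds_iff.1 h1
  set τ : ℕ → ℝ := fun i => δ * i / (K + 1) with hτ
  have hτs : ∀ i ∈ Finset.range K, dist (τ i) 0 < δ := by
    intro i hi
    have hi' : (i : ℝ) < K := by exact_mod_cast Finset.mem_range.1 hi
    rw [Real.dist_eq, sub_zero, abs_of_nonneg (by positivity), div_lt_iff₀ (by positivity)]
    nlinarith
  have hτinj : ∀ i j, i ≠ j → τ i - τ j ≠ 0 := by
    intro i j hij h
    have h2 : τ i = τ j := by linarith
    simp only [hτ] at h2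
    rw [div_left_inj' (by positivity)] at h2
    exact hij (by exact_mod_cast mul_left_cancel₀ hδ.ne' h2)
  have hC : ∀ s t : ℝ, inner ℝ (U (H3.C s) f) (U (H3.C t) f) = inner ℝ (U (H3.C (s - t)) f) f := by
    intro s t
    have : H3.C s = H3.C t * H3.C (s - t) := by ext <;> simp [H3.C]
    rw [this, map_mul]
    exact (U (H3.C t)).inner_map_map _ _
  have hterm : ∀ i j, Tendsto
      (fun g => inner ℝ (U (H3.C (φ g * τ i)) f) (U (H3.C (φ g * τ j)) f)) l
      (𝓝 (if i = j then ‖f‖ ^ 2 else 0)) := by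
    intro i j
    simp_rw [hC, ← mul_sub]
    by_cases hij : i = j
    · subst hij
      have : H3.C 0 = 1 := rfl
      simpa [this] using tendsto_const_nhds
    · rw [if_neg hij]
      have h3 : Tendsto (fun x : ℝ => x * (τ i - τ j)) (cocompact ℝ) (cocompact ℝ) :=
        (Homeomorph.mulRight₀ _ (hτinj i j hij)).isClosedEmbedding.tendsto_cocompact
      exact hmix.comp (h3.comp hl)
  have hsum : Tendsto (fun g => ‖∑ i ∈ Finset.range K, U (H3.C (φ g * τ i)) f‖ ^ 2) l
      (𝓝 (K * ‖f‖ ^ 2)) := by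
    have : Tendsto (fun g => ∑ i ∈ Finset.range K, ∑ j ∈ Finset.range K,
        inner ℝ (U (H3.C (φ g * τ i)) f) (U (H3.C (φ g * τ j)) f)) l
        (𝓝 (∑ i ∈ Finset.range K, ∑ j ∈ Finset.range K, if i = j then ‖f‖ ^ 2 else 0)) :=
      tendsto_finsetSum _ fun i _ => tendsto_finsetSum _ fun j _ => hterm i j
    have e1 : (∑ i ∈ Finset.range K, ∑ j ∈ Finset.range K, if i = j then ‖f‖ ^ 2 else 0)
        = K * ‖f‖ ^ 2 := by
      rw [Finset.sum_congr rfl (g := fun _ => ‖f‖ ^ 2)]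
      · simp
      · intro i hi
        rw [Finset.sum_ite_eq, if_pos hi]
    rw [e1] at this
    refine this.congr fun g => ?_
    rw [← real_inner_self_eq_norm_sq, sum_inner]
    simp_rw [inner_sum]
  have hev := hsum.eventually (gt_mem_nhds (show (K : ℝ) * ‖f‖ ^ 2 < K * ‖f‖ ^ 2 + K by linarith))
  filter_upwards [hev] with g hg
  set S := ∑ i ∈ Finset.range K, U (H3.C (φ g * τ i)) f with hS
  have hSn : ‖S‖ ≤ K * η := by
    refine le_of_sq_le_sq ?_ (by positivity)
    rw [div_lt_iff₀ (by positivity)] at hK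
    nlinarith
  have hpt : ∀ i ∈ Finset.range K,
      |inner ℝ (U g f) e - inner ℝ (U g (U (H3.C (φ g * τ i)) f)) e| ≤ η * (‖f‖ + ‖e‖) := by
    intro i hi
    obtain ⟨k1, k2⟩ := hδ' (hτs i hi)
    rw [dist_eq_norm] at k1 k2
    set w := U g (U (H3.C (φ g * τ i)) f) with hw
    have hwn : ‖w‖ = ‖f‖ := by simp [hw]
    have e1 : U g (U (H (τ i)) f) = U (H (τ i)) w := by
      have := congrArg (fun x => U x f) (hcomm g (τ i))
      simpa [map_mul] using this
    have e2 : inner ℝ (U g f) e - inner ℝ w e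
        = - inner ℝ (U g (U (H (τ i)) f - f)) e - inner ℝ (U (H (τ i)) w) (U (H (τ i)) e - e) := by
      rw [map_sub, e1, inner_sub_left, inner_sub_right, (U (H (τ i))).inner_map_map]
      ring
    rw [e2]
    have b1 := abs_real_inner_le_norm (U g (U (H (τ i)) f - f)) e
    have b2 := abs_real_inner_le_norm (U (H (τ i)) w) (U (H (τ i)) e - e)
    rw [LinearIsometry.norm_map] at b1 b2
    rw [hwn] at b2
    have b3 : ‖U (H (τ i)) f - f‖ * ‖e‖ ≤ η * ‖e‖ := by gcongr
    have b4 : ‖f‖ * ‖U (H (τ i)) e - e‖ ≤ ‖f‖ * η := by gcongr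
    rw [abs_le] at *
    constructor <;> nlinarith
  have hsum2 : |(K : ℝ) * inner ℝ (U g f) e - inner ℝ (U g S) e| ≤ K * (η * (‖f‖ + ‖e‖)) := by
    have : (K : ℝ) * inner ℝ (U g f) e - inner ℝ (U g S) e = ∑ i ∈ Finset.range K,
        (inner ℝ (U g f) e - inner ℝ (U g (U (H3.C (φ g * τ i)) f)) e) := by
      rw [Finset.sum_sub_distrib, hS, map_sum, sum_inner]
      simp
    rw [this]
    refine (Finset.abs_sum_le_sum_abs _ _).trans ((Finset.sum_le_sum hpt).trans ?_)
    simp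
  have hb := abs_real_inner_le_norm (U g S) e
  rw [LinearIsometry.norm_map] at hb
  have hb2 : ‖S‖ * ‖e‖ ≤ K * η * ‖e‖ := by gcongr
  have hfin : (K : ℝ) * |inner ℝ (U g f) e| ≤ K * (2 * η * M) := by
    have : (K : ℝ) * |inner ℝ (U g f) e| = |(K : ℝ) * inner ℝ (U g f) e| := by
      rw [abs_mul, abs_of_pos hKpos]
    rw [this]
    have h5 : |(K : ℝ) * inner ℝ (U g f) e| ≤ K * (η * (‖f‖ + ‖e‖)) + K * η * ‖e‖ := by
      rw [abs_le] at *
      constructor <;> linarith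
    have h6 : 0 ≤ (K : ℝ) * η * (‖f‖ + 2) := by positivity
    rw [hM]; nlinarith
  have hfin2 := le_of_mul_le_mul_left hfin hKpos
  rw [Real.dist_eq, sub_zero]
  have : 2 * η * M = ε / 2 := by rw [hη]; field_simp; norm_num
  linarith

lemma ultra_dichotomy (v : Ultrafilter ℝ) : (v : Filter ℝ) ≤ cocompact ℝ ∨ ∃ x, (v : Filter ℝ) ≤ 𝓝 x := by
  by_cases h : (v : Filter ℝ) ≤ cocompact ℝ
  · exact Or.inl h
  · right
    rw [Filter.not_le] at h
    obtain ⟨s, hs, hs'⟩ := h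
    obtain ⟨t, ht, hts⟩ := mem_cocompact.1 hs
    have : t ∈ v := by
      by_contra hn
      exact hs' (mem_of_superset (Ultrafilter.compl_mem_iff_notMem.2 hn) hts)
    obtain ⟨x, -, hx⟩ := ht.ultrafilter_le_nhds' v this
    exact ⟨x, hx⟩

lemma toProd_cocompact : Tendsto H3.toProd (cocompact H3) (cocompact (ℝ × ℝ × ℝ)) := by
  have h : IsClosedEmbedding H3.toProd := by
    refine ⟨⟨⟨rfl⟩, ?_⟩, ?_⟩
    · intro x y h
      simp only [H3.toProd, Prod.mk.injEq] at h
      ext <;> tauto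
    · have : Set.range H3.toProd = Set.univ := by
        ext p; simp only [Set.mem_range, Set.mem_univ, iff_true]
        exact ⟨H3.ofProd p, rfl⟩
      rw [this]; exact isClosed_univ
  exact h.tendsto_cocompact

lemma aux_main {E : Type*} [NormedAddCommGroup E] [InnerProductSpace ℝ E]
    (U : H3 →* (E →ₗᵢ[ℝ] E)) (S : Set E) (hS : ∀ g, ∀ f ∈ S, U g f ∈ S)
    (hA : ∀ f ∈ S, Tendsto (fun τ => U (H3.A τ) f) (𝓝 0) (𝓝 f))
    (hB : ∀ f ∈ S, Tendsto (fun τ => U (H3.B τ) f) (𝓝 0) (𝓝 f))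
    (hmix : ∀ f ∈ S, ∀ e ∈ S, Tendsto (fun t => inner ℝ (U (H3.C t) f) e) (cocompact ℝ) (𝓝 0))
    (f e : E) (hf : f ∈ S) (he : e ∈ S) :
    Tendsto (fun g => inner ℝ (U g f) e) (cocompact H3) (𝓝 0) := by
  have cont : ∀ H : ℝ → H3, (∀ s t, H (s + t) = H s * H t) →
      (∀ f ∈ S, Tendsto (fun τ => U (H τ) f) (𝓝 0) (𝓝 f)) →
      ∀ f ∈ S, ∀ x, Tendsto (fun τ => U (H τ) f) (𝓝 x) (𝓝 (U (H x) f)) := by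
    intro H hadd h0 f hf x
    have h1 : Tendsto (fun τ : ℝ => τ - x) (𝓝 x) (𝓝 0) := by
      have : Tendsto (fun τ : ℝ => τ - x) (𝓝 x) (𝓝 (x - x)) := tendsto_id.sub_const x
      simpa using this
    have h2 := (h0 _ (hS (H x) f hf)).comp h1
    refine h2.congr fun τ => ?_
    have : H τ = H (τ - x) * H x := by rw [← hadd]; simp
    simp [this]
  rw [tendsto_iff_ultrafilter]
  intro u hu
  rcases ultra_dichotomy (u.map H3.a) with ha | ⟨a₀, ha⟩
  · refine aux_comm U f e H3.B H3.a ?_ (hB f hf) (hB e he) (hmix f hf f hf) u ha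
    intro g τ
    ext <;> simp [H3.B, H3.C, add_comm]
  rcases ultra_dichotomy (u.map H3.b) with hb | ⟨b₀, hb⟩
  · refine aux_comm U f e H3.A (fun g => - g.b) ?_ (hA f hf) (hA e he) (hmix f hf f hf) u ?_
    · intro g τ
      ext <;> simp [H3.A, H3.C, add_comm]
      ring
    · exact ((Homeomorph.neg ℝ).isClosedEmbedding.tendsto_cocompact).comp
        (show Tendsto H3.b u (cocompact ℝ) from hb)
  rcases ultra_dichotomy (u.map H3.c) with hcc | ⟨c₀, hcc⟩
  · have ha' : Tendsto H3.a u (𝓝 a₀) := ha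
    have hb' : Tendsto H3.b u (𝓝 b₀) := hb
    have hc' : Tendsto H3.c u (cocompact ℝ) := hcc
    set v := U (H3.A a₀) f with hv
    have hvS : v ∈ S := hS _ _ hf
    set w := U (H3.B b₀) v with hw
    have hwS : w ∈ S := hS _ _ hvS
    have k1 : Tendsto (fun g : H3 => U (H3.A g.a) f) u (𝓝 v) :=
      (cont H3.A (fun s t => by ext <;> simp [H3.A]) hA f hf a₀).comp ha'
    have k2 : Tendsto (fun g : H3 => U (H3.B g.b) v) u (𝓝 w) :=
      (cont H3.B (fun s t => by ext <;> simp [H3.B]) hB v hvS b₀).comp hb'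
    have k3 : Tendsto (fun g : H3 => inner ℝ (U (H3.C g.c) w) e) u (𝓝 0) :=
      (hmix w hwS e he).comp hc'
    have dec : ∀ g : H3, g = H3.C g.c * (H3.B g.b * H3.A g.a) := by
      intro g; ext <;> simp [H3.A, H3.B, H3.C]
    have k4 : Tendsto (fun g : H3 => (‖U (H3.A g.a) f - v‖ + ‖U (H3.B g.b) v - w‖) * ‖e‖) u
        (𝓝 0) := by
      have := ((tendsto_iff_norm_sub_tendsto_zero.1 k1).add
        (tendsto_iff_norm_sub_tendsto_zero.1 k2)).mul_const ‖e‖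
      simpa using this
    have k5 : Tendsto (fun g : H3 => inner ℝ (U g f) e - inner ℝ (U (H3.C g.c) w) e) u (𝓝 0) := by
      refine squeeze_zero_norm (fun g => ?_) k4
      have e1 : U g f = U (H3.C g.c) (U (H3.B g.b) (U (H3.A g.a) f)) := by
        conv_lhs => rw [dec g]
        simp
      rw [e1, ← inner_sub_left, ← map_sub]
      refine (norm_inner_le_norm _ _).trans ?_
      rw [LinearIsometry.norm_map]
      gcongr
      have e2 : U (H3.B g.b) (U (H3.A g.a) f) - w
          = U (H3.B g.b) (U (H3.A g.a) f - v) + (U (H3.B g.b) v - w) := by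
        rw [map_sub]; abel
      rw [e2]
      refine (norm_add_le _ _).trans ?_
      rw [LinearIsometry.norm_map]
    simpa using k5.add k3
  · exfalso
    have h1 : Tendsto H3.toProd u (𝓝 (a₀, b₀, c₀)) :=
      Tendsto.prodMk_nhds (show Tendsto H3.a u (𝓝 a₀) from ha)
        (Tendsto.prodMk_nhds (show Tendsto H3.b u (𝓝 b₀) from hb)
          (show Tendsto H3.c u (𝓝 c₀) from hcc))
    have h2 : Tendsto H3.toProd u (cocompact (ℝ × ℝ × ℝ)) := toProd_cocompact.mono_left hu
    have h3 := (le_inf h1 h2).trans (disjoint_nhds_cocompact (a₀, b₀, c₀)).le_bot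
    exact (inferInstance : NeBot (map H3.toProd (u : Filter H3))).ne (le_bot_iff.1 h3)

/-- Continuity of measurable one-parameter actions on the measure algebra. -/
lemma aux_cont (s : H3System) (hstd : s.IsStdProb) (H : ℝ → H3)
    (hadd : ∀ x y, H (x + y) = H x * H y) (hH : Measurable H)
    (A : Set s.X) (hA : MeasurableSet A) :
    Tendsto (fun τ => s.μ (symmDiff (s.T (H τ) ⁻¹' A) A)) (𝓝 0) (𝓝 0) := by
  obtain ⟨h1, h2⟩ := hstd
  obtain ⟨D, hDc, hD⟩ := exists_countable_measureDense s.μ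
  have hT : ∀ g, Measurable (s.T g) := fun g => (s.t_mp g).measurable
  rw [ENNReal.tendsto_nhds_zero]
  intro ε hε
  obtain ⟨r, hr, hrε⟩ : ∃ r : ℝ, 0 < r ∧ ENNReal.ofReal r + ENNReal.ofReal r ≤ ε := by
    obtain ⟨q, hq0, hq⟩ := ENNReal.lt_iff_exists_nnreal_btwn.1 hε
    have hq0' : (0 : ℝ) < q := by exact_mod_cast hq0
    refine ⟨q / 2, by positivity, ?_⟩
    rw [← ENNReal.ofReal_add (by positivity) (by positivity), add_halves, ENNReal.ofReal_coe_nnreal]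
    exact hq.le
  let F : Set s.X → Set ℝ := fun t => {τ | s.μ (symmDiff (s.T (H τ) ⁻¹' A) t) < ENNReal.ofReal r}
  have hFm : ∀ t ∈ D, MeasurableSet (F t) := by
    intro t ht
    have hP : Measurable (fun p : ℝ × s.X => s.T (H p.1) p.2) :=
      s.t_meas.comp ((hH.comp measurable_fst).prodMk measurable_snd)
    have hset : MeasurableSet (symmDiff ((fun p : ℝ × s.X => s.T (H p.1) p.2) ⁻¹' A)
        (Prod.snd ⁻¹' t)) := (hP hA).symmDiff (measurable_snd (hD.measurable t ht))
    have := measurable_measure_prodMk_left (ν := s.μ) hset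
    exact measurableSet_lt this measurable_const
  have hcov : (⋃ t ∈ D, F t) = Set.univ := by
    ext τ
    simp only [Set.mem_iUnion, Set.mem_univ, iff_true]
    obtain ⟨t, ht, ht'⟩ := hD.approx _ (hT (H τ) hA) (measure_ne_top _ _) r hr
    exact ⟨t, ht, ht'⟩
  obtain ⟨t, ht, hpos⟩ : ∃ t ∈ D, 0 < (volume : Measure ℝ) (F t) := by
    by_contra hcon
    push Not at hcon
    have h0 : (volume : Measure ℝ) (⋃ t ∈ D, F t) = 0 :=
      (measure_biUnion_null_iff hDc).2 fun t ht => le_antisymm (hcon t ht) zero_le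
    rw [hcov] at h0
    simp at h0
  have hn := Measure.sub_mem_nhds_zero_of_addHaar_pos (volume : Measure ℝ) (F t) (hFm t ht) hpos
  filter_upwards [hn] with τ hτ
  obtain ⟨x, hx, y, hy, rfl⟩ := hτ
  have e1 : symmDiff (s.T (H x) ⁻¹' A) (s.T (H y) ⁻¹' A)
      = s.T (H y) ⁻¹' (symmDiff (s.T (H (x - y)) ⁻¹' A) A) := by
    have : s.T (H x) = s.T (H (x - y)) ∘ s.T (H y) := by
      funext z
      rw [Function.comp_apply, ← s.t_mul, ← hadd, sub_add_cancel]
    rw [this, Set.preimage_comp]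
    rfl
  have e2 := (s.t_mp (H y)).measure_preimage
    ((hT (H (x - y)) hA).symmDiff hA).nullMeasurableSet
  change s.μ (symmDiff (s.T (H (x - y)) ⁻¹' A) A) ≤ ε
  rw [← e2, ← e1]
  refine (measure_symmDiff_le _ t _).trans ?_
  rw [symmDiff_comm t]
  exact (add_le_add (le_of_lt hx) (le_of_lt hy)).trans hrε

/-- Koopman representation. -/
noncomputable def koop (s : H3System) : H3 →* (Lp ℝ 2 s.μ →ₗᵢ[ℝ] Lp ℝ 2 s.μ) where
  toFun g := Lp.compMeasurePreservingₗᵢ ℝ (s.T g⁻¹) (s.t_mp g⁻¹)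
  map_one' := by
    ext1 f
    have : s.T (1 : H3)⁻¹ = id := by funext x; rw [inv_one]; exact s.t_one x
    simp only [this]
    exact Lp.compMeasurePreserving_id_apply f
  map_mul' g h := by
    ext1 f
    have : s.T (g * h)⁻¹ = s.T h⁻¹ ∘ s.T g⁻¹ := by
      funext x; rw [mul_inv_rev]; exact s.t_mul _ _ _
    simp only [this, LinearIsometry.coe_mul,
      Function.comp_apply]
    exact Lp.compMeasurePreserving_comp_apply f (s.t_mp h⁻¹) (s.t_mp g⁻¹)

/-- Centered indicator. -/
noncomputable def cind {X : Type*} [MeasurableSpace X] (μ : Measure X) [IsProbabilityMeasure μ]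
    (A : Set X) (hA : MeasurableSet A) : Lp ℝ 2 μ :=
  indicatorConstLp 2 hA (measure_ne_top μ A) (1 : ℝ)
    - μ.real A • indicatorConstLp 2 MeasurableSet.univ (measure_ne_top μ _) (1 : ℝ)

lemma inner_cind {X : Type*} [MeasurableSpace X] (μ : Measure X) [IsProbabilityMeasure μ]
    (A B : Set X) (hA : MeasurableSet A) (hB : MeasurableSet B) :
    inner ℝ (cind μ A hA) (cind μ B hB) = μ.real (A ∩ B) - μ.real A * μ.real B := by
  simp only [cind, inner_sub_left, inner_sub_right, inner_smul_left, inner_smul_right,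
    L2.real_inner_indicatorConstLp_one_indicatorConstLp_one]
  simp

lemma koop_cind (s : H3System) [IsProbabilityMeasure s.μ] (g : H3)
    (A : Set s.X) (hA : MeasurableSet A) :
    koop s g (cind s.μ A hA) = cind s.μ (s.T g⁻¹ ⁻¹' A) ((s.t_mp g⁻¹).measurable hA) := by
  have h : s.μ.real (s.T g⁻¹ ⁻¹' A) = s.μ.real A := by
    simp only [Measure.real, (s.t_mp g⁻¹).measure_preimage hA.nullMeasurableSet]
  unfold cind
  rw [map_sub, map_smul, h]
  rfl

lemma image_eq (s : H3System) (g : H3) (A : Set s.X) : s.T g '' A = s.T g⁻¹ ⁻¹' A := by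
  ext x
  constructor
  · rintro ⟨y, hy, rfl⟩
    rw [Set.mem_preimage, ← s.t_mul, inv_mul_cancel, s.t_one]
    exact hy
  · intro hx
    exact ⟨_, hx, by rw [← s.t_mul, mul_inv_cancel, s.t_one]⟩

lemma koop_cont (s : H3System) (hstd : s.IsStdProb) [IsProbabilityMeasure s.μ] (H : ℝ → H3)
    (hadd : ∀ x y, H (x + y) = H x * H y) (hH : Measurable fun t => (H t)⁻¹)
    (A : Set s.X) (hA : MeasurableSet A) :
    Tendsto (fun τ => koop s (H τ) (cind s.μ A hA)) (𝓝 0) (𝓝 (cind s.μ A hA)) := by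
  have h := aux_cont s hstd (fun t => (H t)⁻¹)
    (fun x y => by rw [add_comm, hadd, mul_inv_rev]) hH A hA
  have h2 := tendsto_indicatorConstLp_set (p := 2) (c := (1 : ℝ)) (hs := hA)
    (hμs := measure_ne_top s.μ A) (ht := fun τ => (s.t_mp (H τ)⁻¹).measurable hA)
    (hμt := fun τ => measure_ne_top _ _) (by simp) h
  have h3 := h2.sub_const
    (s.μ.real A • indicatorConstLp 2 MeasurableSet.univ (measure_ne_top s.μ _) (1 : ℝ))
  refine h3.congr fun τ => ?_
  rw [koop_cind]
  have h : s.μ.real (s.T (H τ)⁻¹ ⁻¹' A) = s.μ.real A := by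
    simp only [Measure.real, (s.t_mp (H τ)⁻¹).measure_preimage hA.nullMeasurableSet]
  unfold cind
  rw [h]

lemma tendsto_conv {ι : Type*} (l : Filter ι) (s : H3System) [IsProbabilityMeasure s.μ]
    (A B : Set s.X) (hA : MeasurableSet A) (hB : MeasurableSet B) (k : ι → H3) :
    Tendsto (fun i => s.μ (s.T (k i) '' A ∩ B)) l (𝓝 (s.μ A * s.μ B)) ↔
    Tendsto (fun i => inner ℝ (koop s (k i) (cind s.μ A hA)) (cind s.μ B hB)) l (𝓝 0) := by
  rw [← ENNReal.tendsto_toReal_iff (fun _ => measure_ne_top _ _)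
    (ENNReal.mul_ne_top (measure_ne_top _ _) (measure_ne_top _ _)), ENNReal.toReal_mul,
    ← tendsto_sub_nhds_zero_iff]
  refine tendsto_congr fun i => ?_
  have h : s.μ.real (s.T (k i)⁻¹ ⁻¹' A) = s.μ.real A := by
    simp only [Measure.real, (s.t_mp (k i)⁻¹).measure_preimage hA.nullMeasurableSet]
  rw [koop_cind, inner_cind, h, image_eq]
  rfl

lemma measurable_H3 (F : ℝ → H3) (ha : Measurable fun t => (F t).a)
    (hb : Measurable fun t => (F t).b) (hc : Measurable fun t => (F t).c) : Measurable F := by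
  rintro _ ⟨t, ht, rfl⟩
  exact (ha.prodMk (hb.prodMk hc)) ht

end Helpers

section Statement
open MeasureTheory

/-- **Theorem (Ryzhikov / Theorem 3.7).** If the central flow `(T_{c(t)})_{t∈ℝ}` of a
measure-preserving action `T` of `H₃(ℝ)` on a standard probability space is mixing,
then the whole action `T` is mixing. -/
theorem mixing_of_centralMixing (s : H3System) (hstd : s.IsStdProb)
    (hc : s.CentralMixing) : s.Mixing := by
  haveI : IsProbabilityMeasure s.μ := hstd.2
  intro A B hA hB
  rw [tendsto_conv (cocompact H3) s A B hA hB fun g => g]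
  refine aux_main (koop s) {f | ∃ D, ∃ hD : MeasurableSet D, f = cind s.μ D hD}
    ?_ ?_ ?_ ?_ _ _ ⟨A, hA, rfl⟩ ⟨B, hB, rfl⟩
  · rintro g _ ⟨D, hD, rfl⟩
    exact ⟨_, _, koop_cind s g D hD⟩
  · rintro _ ⟨D, hD, rfl⟩
    refine koop_cont s hstd H3.A (fun x y => by ext <;> simp [H3.A]) ?_ D hD
    refine measurable_H3 _ ?_ ?_ ?_ <;> simp [H3.A] <;> fun_prop
  · rintro _ ⟨D, hD, rfl⟩
    refine koop_cont s hstd H3.B (fun x y => by ext <;> simp [H3.B]) ?_ D hD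
    refine measurable_H3 _ ?_ ?_ ?_ <;> simp [H3.B] <;> fun_prop
  · rintro _ ⟨D, hD, rfl⟩ _ ⟨D', hD', rfl⟩
    exact (tendsto_conv (cocompact ℝ) s D D' hD hD' H3.C).1 (hc D D' hD hD')

end Statement
end

section
/- Let T be a measure-preserving action of H₃(ℝ) on a standard probability space (X, ℬ, μ) such that the central flow (T_{c(t)})_{t∈ℝ} is ergodic. If (g_n)_{n≥1} is a sequence in H₃(ℝ), written uniquely as g_n = a(t_{n,1}) b(t_{n,2}) c(t_{n,3}), such that |t_{n,1}| + |t_{n,2}| → ∞, then (g_n) is a mixing sequence for T, i.e. μ(T_{g_n} A ∩ B) → μ(A)μ(B) for all A, B ∈ ℬ. -/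
open Filter Topology Pointwise

section HelperLemmas
open MeasureTheory

namespace H3System

variable (s : H3System)

/-- The Koopman isometry `f ↦ f ∘ T_g` of `L²`. -/
noncomputable def koop (g : H3) : Lp ℝ 2 s.μ →ₗᵢ[ℝ] Lp ℝ 2 s.μ :=
  Lp.compMeasurePreservingₗᵢ ℝ (s.T g) (s.t_mp g)

lemma koop_coe (g : H3) (f : Lp ℝ 2 s.μ) : s.koop g f =ᵐ[s.μ] f ∘ s.T g :=
  Lp.coeFn_compMeasurePreserving f (s.t_mp g)

lemma koop_mul (g h : H3) (f : Lp ℝ 2 s.μ) : s.koop (g * h) f = s.koop h (s.koop g f) := by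
  apply Lp.ext
  have h1 := s.koop_coe (g * h) f
  have h2 := s.koop_coe h (s.koop g f)
  have h3 := (s.t_mp h).quasiMeasurePreserving.ae_eq_comp (s.koop_coe g f)
  filter_upwards [h1, h2, h3] with x h1 h2 h3
  rw [h1, h2, h3]
  simp [s.t_mul]

lemma koop_one (f : Lp ℝ 2 s.μ) : s.koop 1 f = f := by
  apply Lp.ext
  filter_upwards [s.koop_coe 1 f] with x h1
  rw [h1]
  simp [s.t_one]

lemma koop_inv (g : H3) (f : Lp ℝ 2 s.μ) : s.koop g (s.koop g⁻¹ f) = f := by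
  rw [← koop_mul, inv_mul_cancel, koop_one]

lemma koop_inner (g : H3) (f k : Lp ℝ 2 s.μ) :
    inner ℝ (s.koop g f) k = inner ℝ f (s.koop g⁻¹ k) := by
  conv_lhs => rw [← s.koop_inv g k]
  exact (s.koop g).inner_map_map _ _

lemma meas_flow {φ : ℝ → H3} (hφ : Measurable φ) :
    Measurable fun p : ℝ × s.X => s.T (φ p.1) p.2 :=
  s.t_meas.comp ((hφ.comp measurable_fst).prodMk measurable_snd)

lemma meas_mk {a b c : ℝ → ℝ} (ha : Measurable a) (hb : Measurable b) (hc : Measurable c) :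
    Measurable fun t => (⟨a t, b t, c t⟩ : H3) := by
  refine measurable_comap_iff.2 ?_
  exact ha.prodMk (hb.prodMk hc)

lemma meas_dist [SFinite s.μ] {φ : ℝ → H3} (hφ : Measurable φ) (f u : Lp ℝ 2 s.μ) :
    Measurable fun t => edist (s.koop (φ t) f) u := by
  have hf := (Lp.stronglyMeasurable f).measurable
  have hu := (Lp.stronglyMeasurable u).measurable
  have key : ∀ t, edist (s.koop (φ t) f) u
      = (∫⁻ x, ‖f (s.T (φ t) x) - u x‖ₑ ^ (2 : ℝ) ∂s.μ) ^ (1 / (2 : ℝ)) := by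
    intro t
    rw [Lp.edist_def, eLpNorm_eq_lintegral_rpow_enorm_toReal (by simp) (by simp)]
    simp only [ENNReal.toReal_ofNat]
    congr 1
    apply lintegral_congr_ae
    filter_upwards [s.koop_coe (φ t) f] with x hx
    simp [hx]
  simp_rw [key]
  refine Measurable.pow_const ?_ _
  refine Measurable.lintegral_prod_right' (f := fun p : ℝ × s.X =>
    ‖f (s.T (φ p.1) p.2) - u p.2‖ₑ ^ (2 : ℝ)) ?_
  exact (((hf.comp (s.meas_flow hφ)).sub (hu.comp measurable_snd)).enorm).pow_const _

/-- Strong continuity at `0` of the Koopman representation along one-parameter subgroups. -/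
lemma koop_cont [StandardBorelSpace s.X] [IsProbabilityMeasure s.μ] {φ : ℝ → H3}
    (hφ : Measurable φ) (hadd : ∀ x y, φ (x + y) = φ x * φ y) (f : Lp ℝ 2 s.μ) :
    Tendsto (fun t => s.koop (φ t) f) (𝓝 0) (𝓝 f) := by
  have : Fact ((2 : ENNReal) ≠ ⊤) := ⟨by simp⟩
  rw [EMetric.tendsto_nhds]
  intro ε hε
  have hε2 : 0 < ε / 2 := ENNReal.half_pos hε.ne'
  let u := TopologicalSpace.denseSeq (Lp ℝ 2 s.μ)
  let E : ℕ → Set ℝ := fun i => {t | edist (s.koop (φ t) f) (u i) < ε / 2}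
  have hEm : ∀ i, MeasurableSet (E i) := fun i =>
    measurableSet_lt (s.meas_dist hφ f (u i)) measurable_const
  have hEU : ⋃ i, E i = Set.univ := by
    refine Set.eq_univ_of_forall fun t => ?_
    obtain ⟨_, ⟨i, rfl⟩, hi⟩ := EMetric.mem_closure_iff.1
      ((TopologicalSpace.denseRange_denseSeq (Lp ℝ 2 s.μ)) (s.koop (φ t) f)) (ε / 2) hε2
    exact Set.mem_iUnion.2 ⟨i, hi⟩
  obtain ⟨i, hi⟩ : ∃ i, 0 < (volume : Measure ℝ) (E i) := by
    by_contra! hcon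
    have : (volume : Measure ℝ) (⋃ i, E i) = 0 :=
      measure_iUnion_null fun i => le_antisymm (hcon i) bot_le
    rw [hEU] at this
    simp at this
  filter_upwards [Measure.sub_mem_nhds_zero_of_addHaar_pos volume (E i) (hEm i) hi] with t ht
  obtain ⟨x, hx, y, hy, rfl⟩ := Set.mem_sub.1 ht
  have h1 : s.koop (φ y) (s.koop (φ (x - y)) f) = s.koop (φ x) f := by
    rw [← koop_mul, ← hadd, sub_add_cancel]
  calc edist (s.koop (φ (x - y)) f) f
      = edist (s.koop (φ y) (s.koop (φ (x - y)) f)) (s.koop (φ y) f) :=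
        ((s.koop (φ y)).isometry.edist_eq _ _).symm
    _ = edist (s.koop (φ x) f) (s.koop (φ y) f) := by rw [h1]
    _ ≤ edist (s.koop (φ x) f) (u i) + edist (s.koop (φ y) f) (u i) := edist_triangle_right _ _ _
    _ < ε / 2 + ε / 2 := ENNReal.add_lt_add hx hy
    _ = ε := ENNReal.add_halves ε

lemma C_add (x y : ℝ) : H3.C (x + y) = H3.C x * H3.C y := by ext <;> simp [H3.C]
lemma A_add (x y : ℝ) : H3.A (x + y) = H3.A x * H3.A y := by ext <;> simp [H3.A]
lemma B_add (x y : ℝ) : H3.B (x + y) = H3.B x * H3.B y := by ext <;> simp [H3.B]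
lemma C_meas : Measurable H3.C := meas_mk measurable_const measurable_const measurable_id
lemma A_meas : Measurable H3.A := meas_mk measurable_id measurable_const measurable_const
lemma B_meas : Measurable H3.B := meas_mk measurable_const measurable_id measurable_const

/-- Ergodicity for almost invariant sets. -/
lemma ae_erg [IsProbabilityMeasure s.μ] (herg : s.CentralErgodic) (D : Set s.X)
    (hD : MeasurableSet D)
    (hinv : ∀ t : ℝ, ∀ᵐ x ∂s.μ, (s.T (H3.C t) x ∈ D ↔ x ∈ D)) :
    (∀ᵐ x ∂s.μ, x ∈ D) ∨ (∀ᵐ x ∂s.μ, x ∉ D) := by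
  have hm := s.meas_flow C_meas
  let D' : Set s.X := {x | ∀ᵐ t : ℝ, s.T (H3.C t) x ∈ D}
  have hD' : MeasurableSet D' := by
    have : MeasurableSet {p : s.X × ℝ | s.T (H3.C p.2) p.1 ∈ D} := hm.comp measurable_swap hD
    have h2 := measurable_measure_prodMk_left (ν := (volume : Measure ℝ)) this.compl
    exact h2 (measurableSet_singleton 0)
  have hDinv : ∀ t : ℝ, s.T (H3.C t) ⁻¹' D' = D' := by
    intro t
    ext x
    change (∀ᵐ r : ℝ, s.T (H3.C r) (s.T (H3.C t) x) ∈ D) ↔ ∀ᵐ r : ℝ, s.T (H3.C r) x ∈ D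
    simp_rw [← s.t_mul, ← C_add]
    have := (measurePreserving_add_right (volume : Measure ℝ) t)
    have hme : MeasurableSet {r : ℝ | s.T (H3.C r) x ∈ D} :=
      (hm.comp measurable_prodMk_right) hD
    conv_rhs => rw [← this.map_eq]
    rw [ae_map_iff this.aemeasurable hme]
  have hae : ∀ᵐ x ∂s.μ, ∀ᵐ t : ℝ, (s.T (H3.C t) x ∈ D ↔ x ∈ D) := by
    have h1 : MeasurableSet {p : ℝ × s.X | s.T (H3.C p.1) p.2 ∈ D ↔ p.2 ∈ D} := by
      have ha : MeasurableSet {p : ℝ × s.X | s.T (H3.C p.1) p.2 ∈ D} := hm hD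
      have hb : MeasurableSet {p : ℝ × s.X | p.2 ∈ D} := measurable_snd hD
      exact MeasurableSet.iff ha hb
    exact Measure.ae_ae_comm (p := fun (t : ℝ) (x : s.X) => (s.T (H3.C t) x ∈ D ↔ x ∈ D)) h1 |>.1
      (ae_of_all _ hinv)
  have heq : ∀ᵐ x ∂s.μ, (x ∈ D' ↔ x ∈ D) := by
    filter_upwards [hae] with x hx
    constructor
    · intro h
      obtain ⟨t, h1, h2⟩ := (hx.and h).exists
      exact h1.1 h2
    · intro h
      filter_upwards [hx] with t ht
      exact ht.2 h
  rcases herg D' hD' hDinv with h | h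
  · right
    filter_upwards [heq, measure_eq_zero_iff_ae_notMem.1 h] with x h1 h2 h3
    exact h2 (h1.2 h3)
  · left
    filter_upwards [heq, measure_eq_zero_iff_ae_notMem.1 h] with x h1 h2
    exact h1.1 (by simpa using h2)

lemma const_of_inv [IsProbabilityMeasure s.μ] (herg : s.CentralErgodic) (k : Lp ℝ 2 s.μ)
    (hk : ∀ t, s.koop (H3.C t) k = k) : ∃ c : ℝ, k =ᵐ[s.μ] Function.const _ c := by
  refine Filter.exists_eventuallyEq_const_of_forall_separating MeasurableSet fun U hU => ?_
  have hm := (Lp.stronglyMeasurable k).measurable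
  refine s.ae_erg herg (k ⁻¹' U) (hm hU) fun t => ?_
  have := s.koop_coe (H3.C t) k
  rw [hk t] at this
  filter_upwards [this] with x hx
  simp [hx]

/-- The constant function `1`. -/
noncomputable def cst [IsProbabilityMeasure s.μ] : Lp ℝ 2 s.μ := Lp.const 2 s.μ (1 : ℝ)

lemma cst_coe [IsProbabilityMeasure s.μ] : s.cst =ᵐ[s.μ] Function.const _ (1 : ℝ) :=
  Lp.coeFn_const ..

lemma koop_cst [IsProbabilityMeasure s.μ] (g : H3) : s.koop g s.cst = s.cst := by
  apply Lp.ext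
  have h3 := (s.t_mp g).quasiMeasurePreserving.ae_eq_comp s.cst_coe
  filter_upwards [s.koop_coe g s.cst, s.cst_coe, h3] with x h1 h2 h3
  rw [h1, h2, h3]
  simp

/-- The vector form of the mixing statement. -/
lemma koop_mixing [StandardBorelSpace s.X] [IsProbabilityMeasure s.μ]
    (herg : s.CentralErgodic) (g : ℕ → H3)
    (hg : Tendsto (fun n => |(g n).a| + |(g n).b|) atTop atTop) (f : Lp ℝ 2 s.μ)
    (hf : inner ℝ f s.cst = 0) (k : Lp ℝ 2 s.μ) :
    Tendsto (fun n => inner ℝ (s.koop (g n) f) k) atTop (𝓝 0) := by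
  let S : Submodule ℝ (Lp ℝ 2 s.μ) :=
    { carrier := {k | Tendsto (fun n => inner ℝ (s.koop (g n) f) k) atTop (𝓝 0)}
      add_mem' := by
        intro x y hx hy
        simpa [inner_add_right] using Tendsto.add hx hy
      zero_mem' := by simp
      smul_mem' := by
        intro c x hx
        simpa [inner_smul_right] using Tendsto.const_mul c hx }
  have hcst : s.cst ∈ S := by
    change Tendsto (fun n => inner ℝ (s.koop (g n) f) s.cst) atTop (𝓝 0)
    simp [koop_inner, koop_cst, hf]
  have hcob : ∀ (τ : ℝ) (m : Lp ℝ 2 s.μ), s.koop (H3.C τ)⁻¹ m - m ∈ S := by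
    intro τ m
    change Tendsto (fun n => inner ℝ (s.koop (g n) f) (s.koop (H3.C τ)⁻¹ m - m)) atTop (𝓝 0)
    let x : ℕ → ℝ := fun n => -(τ * (g n).b / ((g n).a ^ 2 + (g n).b ^ 2))
    let y : ℕ → ℝ := fun n => τ * (g n).a / ((g n).a ^ 2 + (g n).b ^ 2)
    let h : ℕ → H3 := fun n => H3.A (x n) * H3.B (y n)
    have hinvt : Tendsto (fun n => 2 * |τ| / (|(g n).a| + |(g n).b|)) atTop (𝓝 0) :=
      Tendsto.const_div_atTop hg _
    have hbd : ∀ a b : ℝ, |τ * a / (a ^ 2 + b ^ 2)| ≤ 2 * |τ| / (|a| + |b|) := by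
      intro a b
      by_cases h0 : a = 0
      · subst h0; simp; positivity
      have hpos : 0 < |a| := abs_pos.2 h0
      rw [abs_div, abs_mul, abs_of_nonneg (by positivity : 0 ≤ a ^ 2 + b ^ 2),
        div_le_div_iff₀ (by positivity) (by positivity), ← sq_abs a, ← sq_abs b]
      have : |a| * (|a| + |b|) ≤ 2 * (|a| ^ 2 + |b| ^ 2) := by
        nlinarith [sq_nonneg (|a| - |b|), sq_nonneg (|a|), sq_nonneg (|b|)]
      nlinarith [mul_le_mul_of_nonneg_left this (abs_nonneg τ)]
    have hx : Tendsto x atTop (𝓝 0) := by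
      refine squeeze_zero_norm (fun n => ?_) hinvt
      have := hbd (g n).b (g n).a
      rw [add_comm ((g n).b ^ 2), add_comm |(g n).b|] at this
      rw [Real.norm_eq_abs]
      simp only [x, abs_neg]
      exact this
    have hy : Tendsto y atTop (𝓝 0) := by
      refine squeeze_zero_norm (fun n => ?_) hinvt
      exact hbd (g n).a (g n).b
    have hcont : ∀ v : Lp ℝ 2 s.μ, Tendsto (fun n => ‖s.koop (h n) v - v‖) atTop (𝓝 0) := by
      intro v
      have h1 := tendsto_iff_norm_sub_tendsto_zero.1 ((s.koop_cont A_meas A_add v).comp hx)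
      have h2 := tendsto_iff_norm_sub_tendsto_zero.1 ((s.koop_cont B_meas B_add v).comp hy)
      refine squeeze_zero (fun n => norm_nonneg _) (fun n => ?_) (by simpa using h1.add h2)
      have e : s.koop (h n) v - v = s.koop (H3.B (y n)) (s.koop (H3.A (x n)) v - v)
          + (s.koop (H3.B (y n)) v - v) := by
        simp [h, koop_mul]
      rw [e]
      refine (norm_add_le _ _).trans ?_
      rw [LinearIsometry.norm_map]
    have hlim : Tendsto (fun n => ‖s.koop (h n) f - f‖ * ‖m‖ + ‖f‖ * ‖s.koop (h n) m - m‖)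
        atTop (𝓝 0) := by
      simpa using ((hcont f).mul_const ‖m‖).add ((hcont m).const_mul ‖f‖)
    refine squeeze_zero_norm' ?_ hlim
    filter_upwards [hg.eventually_gt_atTop 0] with n hn
    have hne : (g n).a ^ 2 + (g n).b ^ 2 ≠ 0 := by
      intro h0
      have ha : (g n).a = 0 := by nlinarith [sq_nonneg (g n).a, sq_nonneg (g n).b]
      have hb : (g n).b = 0 := by nlinarith [sq_nonneg (g n).a, sq_nonneg (g n).b]
      simp [ha, hb] at hn
    have hcomm : g n * h n = h n * g n * H3.C τ := by
      have : (g n).a * y n - (g n).b * x n = τ := by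
        simp only [x, y]; field_simp
        ring
      ext
      · simp [h, H3.A, H3.B, H3.C]; ring
      · simp [h, H3.A, H3.B, H3.C]; ring
      · simp [h, H3.A, H3.B, H3.C]; linarith
    have hop : s.koop (H3.C τ) (s.koop (g n) (s.koop (h n) f)) = s.koop (h n) (s.koop (g n) f) := by
      rw [← koop_mul, ← koop_mul, ← koop_mul, hcomm, ← mul_assoc]
    have e1 : inner ℝ (s.koop (g n) f) (s.koop (H3.C τ)⁻¹ m - m)
        = inner ℝ (s.koop (H3.C τ) (s.koop (g n) (f - s.koop (h n) f))) m
          + inner ℝ (s.koop (g n) f) (s.koop (h n)⁻¹ m - m) := by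
      rw [map_sub, map_sub, hop, inner_sub_left, inner_sub_right, inner_sub_right,
        ← koop_inner, ← koop_inner]
      ring
    have e2 : ‖s.koop (h n)⁻¹ m - m‖ = ‖s.koop (h n) m - m‖ := by
      rw [← (s.koop (h n)).norm_map, map_sub, koop_inv, norm_sub_rev]
    rw [e1]
    refine (norm_add_le _ _).trans (add_le_add ?_ ?_)
    · refine (norm_inner_le_norm _ _).trans ?_
      rw [LinearIsometry.norm_map, LinearIsometry.norm_map, norm_sub_rev]
    · refine (norm_inner_le_norm _ _).trans ?_
      rw [LinearIsometry.norm_map, e2]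
  have hperp : Sᗮ = ⊥ := by
    rw [Submodule.eq_bot_iff]
    intro v hv
    have hvS := (Submodule.mem_orthogonal' S v).1 hv
    have hinv : ∀ t, s.koop (H3.C t) v = v := by
      intro t
      refine ext_inner_right ℝ fun m => ?_
      have := hvS _ (hcob t m)
      rw [inner_sub_right, ← koop_inner] at this
      linarith
    obtain ⟨c, hc⟩ := s.const_of_inv herg v hinv
    have hvc : v = c • s.cst := by
      apply Lp.ext
      filter_upwards [hc, s.cst_coe, Lp.coeFn_smul c s.cst] with x h1 h2 h3
      rw [h1, h3, Pi.smul_apply, h2]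
      simp
    have h0 := hvS _ (S.smul_mem c hcst)
    rw [← hvc] at h0
    exact inner_self_eq_zero.1 h0
  have htop := Submodule.topologicalClosure_eq_top_iff.2 hperp
  have hk : k ∈ closure (S : Set (Lp ℝ 2 s.μ)) := by
    rw [← Submodule.topologicalClosure_coe, htop]; trivial
  rw [Metric.tendsto_nhds]
  intro ε hε
  have hδ : 0 < ε / 2 / (‖f‖ + 1) := by positivity
  obtain ⟨k', hk', hd⟩ := Metric.mem_closure_iff.1 hk _ hδ
  have hk'' : Tendsto (fun n => inner ℝ (s.koop (g n) f) k') atTop (𝓝 0) := hk'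
  filter_upwards [(Metric.tendsto_nhds.1 hk'') (ε / 2) (by positivity)] with n hn
  rw [dist_zero_right] at hn ⊢
  have e : inner ℝ (s.koop (g n) f) k
      = inner ℝ (s.koop (g n) f) (k - k') + inner ℝ (s.koop (g n) f) k' := by
    rw [inner_sub_right]; ring
  have h1 : ‖inner ℝ (s.koop (g n) f) (k - k')‖ ≤ ε / 2 := by
    refine (norm_inner_le_norm _ _).trans ?_
    rw [LinearIsometry.norm_map, ← dist_eq_norm]
    have : dist k k' * (‖f‖ + 1) < ε / 2 := (lt_div_iff₀ (by positivity)).1 hd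
    nlinarith [dist_nonneg (x := k) (y := k')]
  rw [e]
  linarith [norm_add_le (inner ℝ (s.koop (g n) f) (k - k')) (inner ℝ (s.koop (g n) f) k')]

end H3System

end HelperLemmas

section Statement
open MeasureTheory

/-- **Corollary 3.8(i).** Let `T` be a measure-preserving action of `H₃(ℝ)` on a standard
probability space whose central flow `(T_{c(t)})_{t∈ℝ}` is ergodic. If `(gₙ)` is a sequence
in `H₃(ℝ)`, written uniquely as `gₙ = a(t_{n,1}) b(t_{n,2}) c(t_{n,3})`, such that
`|t_{n,1}| + |t_{n,2}| → ∞`, then `(gₙ)` is a mixing sequence for `T`.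
(Here `t_{n,1} = (g n).a` and `t_{n,2} = (g n).b` are the canonical coordinates.) -/
theorem mixing_sequence_of_unbounded_ab (s : H3System) (hstd : s.IsStdProb)
    (herg : s.CentralErgodic) (g : ℕ → H3)
    (hg : Tendsto (fun n => |(g n).a| + |(g n).b|) atTop atTop) :
    ∀ A B : Set s.X, MeasurableSet A → MeasurableSet B →
      Tendsto (fun n => s.μ (s.T (g n) '' A ∩ B)) atTop (𝓝 (s.μ A * s.μ B)) := by
  intro A B hA hB
  have := hstd.1
  have := hstd.2
  let iA : Lp ℝ 2 s.μ := indicatorConstLp 2 hA (measure_ne_top _ _) (1 : ℝ)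
  let iB : Lp ℝ 2 s.μ := indicatorConstLp 2 hB (measure_ne_top _ _) (1 : ℝ)
  have hcst : s.cst = indicatorConstLp 2 MeasurableSet.univ (measure_ne_top s.μ _) (1 : ℝ) :=
    (indicatorConstLp_univ ..).symm
  have hAc : inner ℝ iA s.cst = s.μ.real A := by
    rw [hcst, L2.real_inner_indicatorConstLp_one_indicatorConstLp_one]
    simp
  have hcB : inner ℝ s.cst iB = s.μ.real B := by
    rw [hcst, L2.real_inner_indicatorConstLp_one_indicatorConstLp_one]
    simp
  have hcc : inner ℝ s.cst s.cst = (1 : ℝ) := by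
    rw [hcst, L2.real_inner_indicatorConstLp_one_indicatorConstLp_one]
    simp
  have hf : inner ℝ (iA - s.μ.real A • s.cst) s.cst = 0 := by
    rw [inner_sub_left, hAc, real_inner_smul_left, hcc]; simp
  have hlim := s.koop_mixing herg (fun n => (g n)⁻¹) (by simpa using hg) _ hf iB
  have himg : ∀ h : H3, s.T h '' A = s.T h⁻¹ ⁻¹' A := by
    intro h
    refine congrFun (Set.image_eq_preimage_of_inverse ?_ ?_) A
    · intro x; rw [← s.t_mul, inv_mul_cancel, s.t_one]
    · intro x; rw [← s.t_mul, mul_inv_cancel, s.t_one]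
  have hval : ∀ n, inner ℝ (s.koop (g n)⁻¹ (iA - s.μ.real A • s.cst)) iB
      = s.μ.real (s.T (g n) '' A ∩ B) - s.μ.real A * s.μ.real B := by
    intro n
    have hm : MeasurableSet (s.T (g n)⁻¹ ⁻¹' A) := (s.t_mp _).measurable hA
    have hk : s.koop (g n)⁻¹ iA = indicatorConstLp 2 hm (measure_ne_top _ _) (1 : ℝ) :=
      Lp.indicatorConstLp_compMeasurePreserving hA (measure_ne_top _ _) (1 : ℝ) (s.t_mp _)
    rw [map_sub, map_smul, s.koop_cst, inner_sub_left, real_inner_smul_left, hcB, hk, himg]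
    simp [iB, L2.real_inner_indicatorConstLp_one_indicatorConstLp_one]
  simp_rw [hval] at hlim
  have hlim2 := hlim.add_const (s.μ.real A * s.μ.real B)
  simp only [sub_add_cancel, zero_add] at hlim2
  have hlim3 := ENNReal.tendsto_ofReal hlim2
  simpa [Measure.real, ENNReal.ofReal_mul, ENNReal.toReal_nonneg] using hlim3

end Statement
end

section
/- Let T be a measure-preserving action of H₃(ℝ) on a standard probability space (X, ℬ, μ) such that the central flow (T_{c(t)})_{t∈ℝ} is ergodic. Then the flows (T_{a(t)})_{t∈ℝ} and (T_{b(t)})_{t∈ℝ} are both mixing, i.e. μ(T_{a(t)}A ∩ B) → μ(A)μ(B) and μ(T_{b(t)}A ∩ B) → μ(A)μ(B) as |t| → ∞, for all A, B ∈ ℬ. -/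
open Filter Topology Pointwise

section Helpers
open MeasureTheory

/-- Hilbert space core: a commutation relation forces decay of matrix coefficients on the
orthocomplement of the vectors fixed by `C`. -/
lemma mixing_core {H : Type*} [NormedAddCommGroup H] [InnerProductSpace ℝ H] [CompleteSpace H]
    (A B C : ℝ → H →ₗᵢ[ℝ] H)
    (hC : ∀ r f, C (-r) (C r f) = f)
    (hrel : ∀ t s f, A t (B s f) = B s (C (t * s) (A t f)))
    (hB : ∀ f, Tendsto (fun s => B s f) (𝓝 0) (𝓝 f))
    (f w : H) (hw : ∀ v, (∀ r, C r v = v) → inner ℝ v w = 0) :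
    Tendsto (fun t => inner ℝ (A t f) w) (cocompact ℝ) (𝓝 0) := by
  -- coboundaries
  have hcob : ∀ h r, Tendsto (fun t => inner ℝ (A t f) (h - C r h)) (cocompact ℝ) (𝓝 0) := by
    intro h r
    have hinv : Tendsto (fun t : ℝ => (-r) * t⁻¹) (cocompact ℝ) (𝓝 0) := by
      have h := (tendsto_inv₀_cobounded (α := ℝ)).const_mul (-r)
      rwa [mul_zero, Metric.cobounded_eq_cocompact] at h
    have h1 : Tendsto (fun t : ℝ => ‖f - B ((-r) * t⁻¹) f‖ * ‖h‖
        + ‖f‖ * ‖h - B ((-r) * t⁻¹) h‖) (cocompact ℝ) (𝓝 0) := by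
      have e1 := ((tendsto_const_nhds (x := f)).sub ((hB f).comp hinv)).norm.mul_const ‖h‖
      have e2 := ((tendsto_const_nhds (x := h)).sub ((hB h).comp hinv)).norm.const_mul ‖f‖
      simpa using e1.add e2
    refine squeeze_zero_norm' ?_ h1
    have hne : ∀ᶠ t : ℝ in cocompact ℝ, t ≠ 0 := by
      have := (isCompact_singleton (x := (0 : ℝ))).compl_mem_cocompact
      filter_upwards [this] with t ht using ht
    filter_upwards [hne] with t ht
    set s := (-r) * t⁻¹ with hs
    have hts : t * s = -r := by rw [hs]; field_simp
    have key : inner ℝ (A t f) (C r h) = inner ℝ (A t (B s f)) (B s h) := by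
      rw [hrel, LinearIsometry.inner_map_map, hts]
      conv_rhs => rw [← hC r h, LinearIsometry.inner_map_map]
    have : inner ℝ (A t f) (h - C r h)
        = inner ℝ (A t (f - B s f)) h + inner ℝ (A t (B s f)) (h - B s h) := by
      rw [inner_sub_right, key, map_sub, inner_sub_left, inner_sub_right]; ring
    rw [this]
    refine (norm_add_le _ _).trans (add_le_add ?_ ?_)
    · refine (norm_inner_le_norm _ _).trans (by rw [LinearIsometry.norm_map])
    · refine (norm_inner_le_norm _ _).trans (by rw [LinearIsometry.norm_map, LinearIsometry.norm_map])
  set K : Submodule ℝ H := Submodule.span ℝ {x | ∃ h r, x = h - C r h} with hK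
  have hspan : ∀ x ∈ K, Tendsto (fun t => inner ℝ (A t f) x) (cocompact ℝ) (𝓝 0) := by
    intro x hx
    induction hx using Submodule.span_induction with
    | mem x hx => obtain ⟨h, r, rfl⟩ := hx; exact hcob h r
    | zero => simp
    | add x y _ _ hx hy => simpa [inner_add_right] using hx.add hy
    | smul a x _ hx => simpa [inner_smul_right] using hx.const_mul a
  have hwK : w ∈ K.topologicalClosure := by
    rw [← Submodule.orthogonal_orthogonal_eq_closure, Submodule.mem_orthogonal]
    intro v hv
    refine hw v fun r => ?_
    have h0 : inner ℝ (v - C r v) v = 0 :=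
      (Submodule.mem_orthogonal _ _).1 hv _ (Submodule.subset_span ⟨v, r, rfl⟩)
    have h1 : inner ℝ v v = inner ℝ (C r v) v := by
      rw [inner_sub_left] at h0; linarith
    have : ‖C r v - v‖ ^ 2 = 0 := by
      rw [norm_sub_sq_real, ← h1, LinearIsometry.norm_map, real_inner_self_eq_norm_sq]; ring
    exact sub_eq_zero.1 (norm_eq_zero.1 (pow_eq_zero_iff (two_ne_zero) |>.1 this))
  rw [Metric.tendsto_nhds]
  intro ε hε
  have hδ : 0 < ε / (2 * (‖f‖ + 1)) := by positivity
  obtain ⟨x, hx, hxw⟩ := Metric.mem_closure_iff.1 hwK _ hδ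
  filter_upwards [(Metric.tendsto_nhds.1 (hspan x hx)) (ε / 2) (by positivity)] with t ht
  rw [dist_zero_right] at ht ⊢
  have e : inner ℝ (A t f) w = inner ℝ (A t f) (w - x) + inner ℝ (A t f) x := by
    rw [inner_sub_right]; ring
  have e2 : ‖inner ℝ (A t f) (w - x)‖ ≤ ε / 2 := by
    refine (norm_inner_le_norm _ _).trans ?_
    rw [LinearIsometry.norm_map, ← dist_eq_norm]
    calc ‖f‖ * dist w x ≤ (‖f‖ + 1) * (ε / (2 * (‖f‖ + 1))) := by
          gcongr; linarith
      _ = ε / 2 := by field_simp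
  rw [e]
  linarith [norm_add_le (inner ℝ (A t f) (w - x)) (inner ℝ (A t f) x)]

variable {X : Type*} [MeasurableSpace X] {μ : Measure X}

/-- Strong continuity at `0` of the Koopman representation of a measurable flow. -/
lemma koopman_continuous [StandardBorelSpace X] [IsProbabilityMeasure μ]
    (S : ℝ → X → X) (hadd : ∀ s t x, S (s + t) x = S s (S t x)) 
    (hm : Measurable fun p : ℝ × X => S p.1 p.2) (hmp : ∀ t, MeasurePreserving (S t) μ μ)
    (f : Lp ℝ 2 μ) :
    Tendsto (fun s => Lp.compMeasurePreservingₗᵢ ℝ (S s) (hmp s) f) (𝓝 0) (𝓝 f) := by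
  set U : ℝ → Lp ℝ 2 μ →ₗᵢ[ℝ] Lp ℝ 2 μ := fun s => Lp.compMeasurePreservingₗᵢ ℝ (S s) (hmp s) with hU
  have hUadd : ∀ s t g, U (s + t) g = U t (U s g) := by
    intro s t g
    have : S (s + t) = S s ∘ S t := funext fun x => hadd s t x
    have h2 := Lp.compMeasurePreserving_comp_apply (E := ℝ) (p := 2) g (hmp s) (hmp t)
    simp only [← this] at h2
    exact h2
  have hfm := Lp.stronglyMeasurable f
  have hmeas : ∀ g : Lp ℝ 2 μ, Measurable fun s => ‖U s f - g‖ := by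
    intro g
    have : ∀ s, ‖U s f - g‖ = (eLpNorm (fun x => f (S s x) - g x) 2 μ).toReal := by
      intro s
      rw [Lp.norm_def]
      congr 1
      refine eLpNorm_congr_ae ?_
      filter_upwards [Lp.coeFn_sub (U s f) g, Lp.coeFn_compMeasurePreserving f (hmp s)] with x h1 h2
      rw [h1, Pi.sub_apply]
      congr 1
    simp_rw [this, eLpNorm_eq_lintegral_rpow_enorm_toReal (two_ne_zero) (ENNReal.ofNat_ne_top)]
    refine Measurable.ennreal_toReal (Measurable.pow_const ?_ _)
    refine Measurable.lintegral_prod_right' (f := fun p : ℝ × X => ‖f (S p.1 p.2) - g p.2‖ₑ ^ (2 : ENNReal).toReal) ?_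
    refine Measurable.pow_const (Measurable.enorm ?_) _
    exact (hfm.measurable.comp hm).sub ((Lp.stronglyMeasurable g).measurable.comp measurable_snd)
  rw [Metric.tendsto_nhds]
  intro ε hε
  have : Fact ((2 : ENNReal) ≠ ⊤) := ⟨ENNReal.ofNat_ne_top⟩
  obtain ⟨D, hDc, hDd⟩ := TopologicalSpace.exists_countable_dense (Lp ℝ 2 μ)
  have hcov : (Set.univ : Set ℝ) ⊆ ⋃ g ∈ D, {s | ‖U s f - g‖ < ε / 2} := by
    intro s _
    obtain ⟨g, hg, hgd⟩ := Metric.dense_iff.1 hDd (U s f) (ε / 2) (by positivity)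
    simp only [Set.mem_iUnion]
    refine ⟨g, hgd, ?_⟩
    rw [Metric.mem_ball, dist_comm, dist_eq_norm] at hg
    exact hg
  have hpos : ∃ g ∈ D, 0 < volume {s | ‖U s f - g‖ < ε / 2} := by
    by_contra! hcon
    have h0 : volume (⋃ g ∈ D, {s | ‖U s f - g‖ < ε / 2}) = 0 :=
      (measure_biUnion_null_iff hDc).2 fun g hg => le_antisymm (hcon g hg) zero_le
    have := measure_mono_null hcov h0
    simp at this
  obtain ⟨g, -, hg⟩ := hpos
  have hst := MeasureTheory.Measure.sub_mem_nhds_zero_of_addHaar_pos volume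
    {s | ‖U s f - g‖ < ε / 2} (measurableSet_lt (hmeas g) measurable_const) hg
  filter_upwards [hst] with s hs
  obtain ⟨p, hp, q, hq, rfl⟩ := Set.mem_sub.1 hs
  have : dist (U (p - q) f) f = dist (U p f) (U q f) := by
    rw [← (U q).isometry.dist_eq, ← hUadd, sub_add_cancel]
  change dist (U (p - q) f) f < ε
  rw [this]
  have hp' : dist (U p f) g < ε / 2 := by rw [dist_eq_norm]; exact hp
  have hq' : dist (U q f) g < ε / 2 := by rw [dist_eq_norm]; exact hq
  linarith [dist_triangle_right (U p f) (U q f) g]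

/-- An a.e. invariant measurable function for an ergodic measurable flow is constant a.e. -/
lemma ergodic_flow_const [IsProbabilityMeasure μ]
    (S : ℝ → X → X) (hadd : ∀ s t x, S (s + t) x = S s (S t x)) 
    (hm : Measurable fun p : ℝ × X => S p.1 p.2)
    (herg : ∀ A : Set X, MeasurableSet A → (∀ t, S t ⁻¹' A = A) → μ A = 0 ∨ μ Aᶜ = 0)
    (f : X → ℝ) (hf : Measurable f) (hinv : ∀ t, ∀ᵐ x ∂μ, f (S t x) = f x) :
    ∃ c, f =ᵐ[μ] Function.const X c := by
  refine Filter.exists_eventuallyEq_const_of_forall_separating MeasurableSet fun V hV => ?_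
  have hE : ∀ᵐ x ∂μ, ∀ᵐ t : ℝ, f (S t x) = f x := by
    have hms : MeasurableSet {p : ℝ × X | f (S p.1 p.2) = f p.2} :=
      measurableSet_eq_fun (hf.comp hm) (hf.comp measurable_snd)
    exact (Measure.ae_ae_comm (μ := (volume : Measure ℝ)) (ν := μ) hms).1 (ae_of_all _ hinv)
  set E : Set X := {x | volume {t : ℝ | f (S t x) ∉ V} = 0} with hEdef
  have hEm : MeasurableSet E := by
    have hms : MeasurableSet {p : ℝ × X | f (S p.1 p.2) ∉ V} := ((hf.comp hm) hV).compl
    have := measurable_measure_prodMk_right (μ := (volume : Measure ℝ)) hms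
    exact this (measurableSet_singleton 0)
  have hEi : ∀ t, S t ⁻¹' E = E := by
    intro t
    ext x
    have : {r : ℝ | f (S r (S t x)) ∉ V} = (fun r => r + t) ⁻¹' {r : ℝ | f (S r x) ∉ V} := by
      ext r; simp [hadd]
    simp only [hEdef, Set.mem_preimage, Set.mem_ofPred_eq, this, measure_preimage_add_right]
  have hEV : ∀ᵐ x ∂μ, (x ∈ E ↔ f x ∈ V) := by
    filter_upwards [hE] with x hx
    have h1 : x ∈ E ↔ ∀ᵐ t : ℝ, f (S t x) ∈ V := Iff.rfl
    rw [h1]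
    constructor
    · intro h
      obtain ⟨t, h1, h2⟩ := (h.and hx).exists
      rwa [← h2]
    · intro h
      filter_upwards [hx] with t ht
      rwa [ht]
  rcases herg E hEm hEi with h | h
  · right
    filter_upwards [hEV, measure_eq_zero_iff_ae_notMem.1 h] with x h1 h2
    exact fun h3 => h2 (h1.2 h3)
  · left
    filter_upwards [hEV, measure_eq_zero_iff_ae_notMem.1 h] with x h1 h2
    exact h1.1 (by simpa using h2)

lemma flow_mixing_general (s : H3System) (hstd : s.IsStdProb) (φ ψ γ : ℝ → H3)
    (hφ : ∀ t, (φ t)⁻¹ = φ (-t))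
    (hψ : ∀ t r, ψ (t + r) = ψ t * ψ r) (hψm : Measurable ψ)
    (hγ : ∀ t r, γ (t + r) = γ t * γ r) (hγm : Measurable γ) (hγ0 : γ 0 = 1)
    (hrel : ∀ t r, ψ r * φ t = φ t * γ (t * r) * ψ r)
    (herg : ∀ A : Set s.X, MeasurableSet A → (∀ t : ℝ, s.T (γ t) ⁻¹' A = A) →
      s.μ A = 0 ∨ s.μ Aᶜ = 0) :
    FlowMixingFam s.μ (fun t => s.T (φ t)) := by
  obtain ⟨h1, h2⟩ := hstd
  set U : H3 → Lp ℝ 2 s.μ →ₗᵢ[ℝ] Lp ℝ 2 s.μ :=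
    fun g => Lp.compMeasurePreservingₗᵢ ℝ (s.T g) (s.t_mp g) with hU
  have hUmul : ∀ g h f, U (g * h) f = U h (U g f) := by
    intro g h f
    have : s.T (g * h) = s.T g ∘ s.T h := funext fun x => s.t_mul g h x
    have h2 := Lp.compMeasurePreserving_comp_apply (E := ℝ) (p := 2) f (s.t_mp g) (s.t_mp h)
    simp only [← this] at h2
    exact h2
  have hU1 : ∀ f, U 1 f = f := by
    intro f
    have : s.T 1 = id := funext fun x => s.t_one x
    have h2 := Lp.compMeasurePreserving_id_apply (E := ℝ) (p := 2) (μb := s.μ) f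
    simp only [← this] at h2
    exact h2
  have hflowm : ∀ η : ℝ → H3, Measurable η → Measurable fun p : ℝ × s.X => s.T (η p.1) p.2 :=
    fun η hη => s.t_meas.comp ((hη.comp measurable_fst).prodMk measurable_snd)
  intro A B hA hB
  have hone : ∀ D : Set s.X, s.μ D ≠ ⊤ := fun D => measure_ne_top _ _
  set one : Lp ℝ 2 s.μ := indicatorConstLp 2 MeasurableSet.univ (hone _) 1 with hone_def
  set fA : Lp ℝ 2 s.μ := indicatorConstLp 2 hA (hone _) 1 with hfA
  set fB : Lp ℝ 2 s.μ := indicatorConstLp 2 hB (hone _) 1 with hfB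
  have hcore := mixing_core (fun t => U (φ t)) (fun t => U (ψ t)) (fun t => U (γ t))
    (fun r f => by rw [← hUmul, ← hγ, add_neg_cancel, hγ0, hU1])
    (fun t r f => by simp only [← hUmul]; rw [hrel])
    (fun f => koopman_continuous (fun t => s.T (ψ t)) (fun a b x => by rw [hψ, s.t_mul])
      (hflowm ψ hψm) (fun t => s.t_mp _) f)
    fA (fB - s.μ.real B • one) (by
      intro v hv
      obtain ⟨c, hc⟩ := ergodic_flow_const (μ := s.μ) (fun t => s.T (γ t))
        (fun a b x => by rw [hγ, s.t_mul]) (hflowm γ hγm) herg v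
        (Lp.stronglyMeasurable v).measurable (fun t => by
          have h := Lp.coeFn_compMeasurePreserving v (s.t_mp (γ t))
          have h' : Lp.compMeasurePreserving (s.T (γ t)) (s.t_mp (γ t)) v = v := hv t
          rw [h'] at h
          filter_upwards [h] with x hx using hx.symm)
      have hvc : v = c • one := by
        refine Lp.ext ?_
        filter_upwards [hc, Lp.coeFn_smul c one, 
          indicatorConstLp_coeFn (p := 2) (hs := MeasurableSet.univ) (hμs := hone Set.univ) (c := (1 : ℝ))] with x h1 h2 h3
        rw [h1, h2, Pi.smul_apply, hone_def, h3]; simp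
      rw [hvc, inner_smul_left, inner_sub_right, inner_smul_right, hone_def, hfB,
        L2.real_inner_indicatorConstLp_one_indicatorConstLp_one,
        L2.real_inner_indicatorConstLp_one_indicatorConstLp_one]
      simp)
  have himg : ∀ t, s.T (φ t) '' A = s.T (φ (-t)) ⁻¹' A := by
    intro t
    rw [← hφ]
    refine Set.image_eq_preimage_of_inverse ?_ ?_ ▸ rfl
    · intro x; rw [← s.t_mul, inv_mul_cancel, s.t_one]
    · intro x; rw [← s.t_mul, mul_inv_cancel, s.t_one]
  have hUA : ∀ g, U g fA = indicatorConstLp 2 ((s.t_mp g).measurable hA) (hone _) 1 := by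
    intro g
    exact Lp.indicatorConstLp_compMeasurePreserving hA (hone _) 1 (s.t_mp g)
  have hval : ∀ t, inner ℝ (U (φ t) fA) (fB - s.μ.real B • one)
      = s.μ.real (s.T (φ t) ⁻¹' A ∩ B) - s.μ.real A * s.μ.real B := by
    intro t
    rw [hUA, inner_sub_right, inner_smul_right, hone_def, hfB,
        L2.real_inner_indicatorConstLp_one_indicatorConstLp_one,
        L2.real_inner_indicatorConstLp_one_indicatorConstLp_one, Set.inter_univ,
        measureReal_def, measureReal_def, measureReal_def, measureReal_def,
        (s.t_mp (φ t)).measure_preimage hA.nullMeasurableSet]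
    ring
  simp only [hval] at hcore
  have hneg : Tendsto (fun t : ℝ => -t) (cocompact ℝ) (cocompact ℝ) :=
    (Homeomorph.neg ℝ).isClosedEmbedding.tendsto_cocompact
  have hc2 := (hcore.comp hneg).add_const (s.μ.real A * s.μ.real B)
  simp only [Function.comp_def, sub_add_cancel, zero_add, ← himg] at hc2
  have := ENNReal.tendsto_ofReal hc2
  rw [ENNReal.ofReal_mul measureReal_nonneg] at this
  simpa only [ofReal_measureReal (hone _)] using this

lemma H3_measurable {f : ℝ → H3} (h : Measurable fun t => ((f t).a, (f t).b, (f t).c)) :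
    Measurable f := measurable_comap_iff.2 h

end Helpers

section Statement
open MeasureTheory

/-- **Corollary 3.8(ii).** Let `T` be a measure-preserving action of `H₃(ℝ)` on a standard
probability space whose central flow `(T_{c(t)})_{t∈ℝ}` is ergodic. Then the flows
`(T_{a(t)})_{t∈ℝ}` and `(T_{b(t)})_{t∈ℝ}` are both mixing. -/
theorem ab_flows_mixing_of_centralErgodic (s : H3System) (hstd : s.IsStdProb)
    (herg : s.CentralErgodic) :
    FlowMixingFam s.μ (fun t => s.T (H3.A t)) ∧
    FlowMixingFam s.μ (fun t => s.T (H3.B t)) := by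
  have hm1 : Measurable H3.A := H3_measurable (by simp only [H3.A]; fun_prop)
  have hm2 : Measurable H3.B := H3_measurable (by simp only [H3.B]; fun_prop)
  have hm3 : Measurable H3.C := H3_measurable (by simp only [H3.C]; fun_prop)
  constructor
  · refine flow_mixing_general s hstd H3.A H3.B (fun t => H3.C (-t)) ?_ ?_ hm2 ?_
      (hm3.comp measurable_neg) ?_ ?_ ?_
    · intro t; ext <;> simp [H3.A]
    · intro t r; ext <;> simp [H3.B]
    · intro t r; ext <;> simp [H3.C]; ring
    · ext <;> simp [H3.C]
    · intro t r; ext <;> simp [H3.A, H3.B, H3.C]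
    · intro D hD h
      exact herg D hD fun t => by simpa using h (-t)
  · refine flow_mixing_general s hstd H3.B H3.A H3.C ?_ ?_ hm1 ?_ hm3 ?_ ?_ herg
    · intro t; ext <;> simp [H3.B]
    · intro t r; ext <;> simp [H3.A]
    · intro t r; ext <;> simp [H3.C]
    · ext <;> simp [H3.C]
    · intro t r; ext <;> simp [H3.A, H3.B, H3.C]; ring

end Statement
end

section
/- Let T be a measure-preserving action of H₃(ℝ) on a standard probability space (X, ℬ, μ) such that the central flow (T_{c(t)})_{t∈ℝ} is ergodic. If T is rigid, then the flow {T_{c(t)} : t ∈ ℝ} is rigid, i.e. there is a sequence of reals t_n with |t_n| → ∞ such that μ(T_{c(t_n)} A ∩ B) → μ(A ∩ B) for all A, B ∈ ℬ. -/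
open Filter Topology Pointwise

section Statement
open MeasureTheory

theorem flow_cont {X : Type} [MeasurableSpace X] (μ : Measure X) [IsProbabilityMeasure μ]
    (S : ℝ → X → X) (hadd : ∀ t u x, S (t + u) x = S t (S u x))
    (hmeas : Measurable fun p : ℝ × X => S p.1 p.2)
    (hmp : ∀ t, MeasurePreserving (S t) μ μ) (A : Set X) (hA : MeasurableSet A) :
    Tendsto (fun h : ℝ => μ (symmDiff (S h ⁻¹' A) A)) (𝓝 0) (𝓝 0) := by
  let W : ℝ → Set (ℝ × X) := fun h =>
    symmDiff ((fun p : ℝ × X => S (h + p.1) p.2) ⁻¹' A) ((fun p : ℝ × X => S p.1 p.2) ⁻¹' A)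
  have hm2 : ∀ h : ℝ, Measurable fun p : ℝ × X => S (h + p.1) p.2 := fun h =>
    hmeas.comp (f := fun p : ℝ × X => (h + p.1, p.2)) (by fun_prop)
  have hW : ∀ h, MeasurableSet (W h) := fun h => ((hm2 h) hA).symmDiff (hmeas hA)
  let ν : Measure ℝ := volume.restrict (Set.Icc 0 1)
  have hν : ν Set.univ = 1 := by simp [ν]
  haveI : IsProbabilityMeasure ν := ⟨hν⟩
  have hSm : ∀ h, MeasurableSet (S h ⁻¹' A) := fun h => (hmp h).measurable hA
  have e1 : ∀ h, μ (symmDiff (S h ⁻¹' A) A) = (ν.prod μ) (W h) := by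
    intro h
    rw [Measure.prod_apply (hW h)]
    have : ∀ t, μ (Prod.mk t ⁻¹' W h) = μ (symmDiff (S h ⁻¹' A) A) := by
      intro t
      rw [← (hmp t).measure_preimage ((hSm h).symmDiff hA).nullMeasurableSet]
      congr 1
      ext x
      simp [W, Set.mem_symmDiff, hadd]
    simp [this, hν]
  have e2 : ∀ h, (ν.prod μ) (W h) = ∫⁻ x, ν ((fun t => (t, x)) ⁻¹' W h) ∂μ := fun h =>
    Measure.prod_apply_symm (hW h)
  simp_rw [e1, e2]
  have key : ∀ x, Tendsto (fun h : ℝ => ν ((fun t => (t, x)) ⁻¹' W h)) (𝓝 0) (𝓝 0) := by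
    intro x
    let E : Set ℝ := {t | S t x ∈ A}
    have hE : MeasurableSet E :=
      (hmeas.comp (f := fun t : ℝ => (t, x)) (by fun_prop)) hA
    let F : Set ℝ := E ∩ Set.Icc (-1) 2
    have hF : MeasurableSet F := hE.inter measurableSet_Icc
    have hFfin : volume F ≠ ⊤ := by
      refine ne_top_of_le_ne_top ?_ (measure_mono Set.inter_subset_right)
      simp
    let f : C(ℝ, C(ℝ, ℝ)) := ContinuousMap.curry ⟨fun p : ℝ × ℝ => p.1 + p.2, by fun_prop⟩
    have h1 : Tendsto (fun h : ℝ => volume (symmDiff (f h ⁻¹' F) (f 0 ⁻¹' F))) (𝓝 0) (𝓝 0) :=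
      tendsto_measure_symmDiff_preimage_nhds_zero (f.continuous.tendsto 0)
        (Eventually.of_forall fun h => measurePreserving_add_left volume h)
        (measurePreserving_add_left volume 0) hF.nullMeasurableSet hFfin
    refine tendsto_of_tendsto_of_tendsto_of_le_of_le' tendsto_const_nhds h1
      (Eventually.of_forall fun _ => zero_le) ?_
    filter_upwards [Metric.ball_mem_nhds (0:ℝ) one_pos] with h hh
    rw [Metric.mem_ball, dist_zero_right, Real.norm_eq_abs, abs_lt] at hh
    simp only [ν]
    rw [Measure.restrict_apply' measurableSet_Icc]
    refine measure_mono ?_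
    rintro t ⟨ht, ht0, ht1⟩
    have k1 : h + t ∈ Set.Icc (-1:ℝ) 2 := ⟨by linarith, by linarith⟩
    have k2 : t ∈ Set.Icc (-1:ℝ) 2 := ⟨by linarith, by linarith⟩
    simp only [W, Set.mem_preimage, Set.mem_symmDiff] at ht
    simp only [Set.mem_symmDiff, Set.mem_preimage, F, E, f, ContinuousMap.curry_apply,
      ContinuousMap.coe_mk, Set.mem_inter_iff, k1, k2, and_true, zero_add, Set.mem_setOf_eq]
    exact ht
  have := tendsto_lintegral_filter_of_dominated_convergence (μ := μ) (l := 𝓝 (0:ℝ))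
    (F := fun h x => ν ((fun t => (t, x)) ⁻¹' W h)) (f := fun _ => 0) (fun _ => 1)
    (Eventually.of_forall fun h => measurable_measure_prodMk_right (hW h))
    (Eventually.of_forall fun h => Eventually.of_forall fun x => prob_le_one)
    (by simp) (Eventually.of_forall key)
  simpa using this

namespace H3System

variable (s : H3System)

/-- displacement of a set -/
noncomputable def disp (g : H3) (A : Set s.X) : ENNReal := s.μ (symmDiff (s.T g ⁻¹' A) A)

lemma image_eq (g : H3) (A : Set s.X) : s.T g '' A = s.T g⁻¹ ⁻¹' A := by
  ext x
  constructor
  · rintro ⟨y, hy, rfl⟩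
    simpa [← s.t_mul, s.t_one] using hy
  · intro hx
    exact ⟨_, hx, by rw [← s.t_mul, mul_inv_cancel, s.t_one]⟩

lemma meas_pre (g : H3) {A : Set s.X} (hA : MeasurableSet A) : MeasurableSet (s.T g ⁻¹' A) :=
  (s.t_mp g).measurable hA

lemma mp_symm (g : H3) {A B : Set s.X} (hA : MeasurableSet A) (hB : MeasurableSet B) :
    s.μ (symmDiff (s.T g ⁻¹' A) (s.T g ⁻¹' B)) = s.μ (symmDiff A B) := by
  rw [← Set.preimage_symmDiff, (s.t_mp g).measure_preimage (hA.symmDiff hB).nullMeasurableSet]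

lemma pre_mul (g h : H3) (A : Set s.X) : s.T (g * h) ⁻¹' A = s.T h ⁻¹' (s.T g ⁻¹' A) := by
  ext x; simp [s.t_mul]

lemma disp_mul (g h : H3) {A : Set s.X} (hA : MeasurableSet A) :
    s.disp (g * h) A ≤ s.disp g A + s.disp h A := by
  unfold disp
  rw [pre_mul, ← s.mp_symm h (s.meas_pre g hA) hA]
  exact measure_symmDiff_le _ _ _

lemma pre_one (A : Set s.X) : s.T 1 ⁻¹' A = A := by
  ext x; simp [s.t_one]

lemma disp_inv (g : H3) {A : Set s.X} (hA : MeasurableSet A) :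
    s.disp g⁻¹ A = s.disp g A := by
  unfold disp
  rw [← s.mp_symm g (s.meas_pre _ hA) hA, ← pre_mul, inv_mul_cancel, pre_one, symmDiff_comm]

lemma disp_conj (k g : H3) {A : Set s.X} (hA : MeasurableSet A) :
    s.disp (k⁻¹ * g * k) A = s.disp g (s.T k⁻¹ ⁻¹' A) := by
  unfold disp
  rw [← s.mp_symm k (s.meas_pre _ (s.meas_pre _ hA)) (s.meas_pre _ hA), ← pre_mul, ← pre_mul,
    ← pre_mul, inv_mul_cancel, pre_one, mul_assoc]

/-- rigidity along a sequence -/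
def Rig (g : ℕ → H3) : Prop :=
  ∀ A : Set s.X, MeasurableSet A → Tendsto (fun n => s.disp (g n) A) atTop (𝓝 0)

variable {s}

lemma Rig.mul {g h : ℕ → H3} (hg : s.Rig g) (hh : s.Rig h) : s.Rig (fun n => g n * h n) := by
  intro A hA
  have := (hg A hA).add (hh A hA)
  rw [add_zero] at this
  exact tendsto_of_tendsto_of_tendsto_of_le_of_le tendsto_const_nhds this
    (fun _ => zero_le) (fun n => s.disp_mul _ _ hA)

lemma Rig.inv {g : ℕ → H3} (hg : s.Rig g) : s.Rig (fun n => (g n)⁻¹) := by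
  intro A hA
  simpa only [s.disp_inv _ hA] using hg A hA

lemma Rig.conj {g : ℕ → H3} (hg : s.Rig g) (k : H3) : s.Rig (fun n => k⁻¹ * g n * k) := by
  intro A hA
  simpa only [s.disp_conj _ _ hA] using hg _ (s.meas_pre _ hA)

lemma Rig.comp {g : ℕ → H3} (hg : s.Rig g) {φ : ℕ → ℕ} (hφ : Tendsto φ atTop atTop) :
    s.Rig (g ∘ φ) := fun A hA => (hg A hA).comp hφ

lemma rig_of_weak [IsProbabilityMeasure s.μ] {g : ℕ → H3}
    (h : ∀ A B : Set s.X, MeasurableSet A → MeasurableSet B →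
      Tendsto (fun n => s.μ (s.T (g n) '' A ∩ B)) atTop (𝓝 (s.μ (A ∩ B)))) : s.Rig g := by
  suffices hh : s.Rig (fun n => (g n)⁻¹) by simpa using hh.inv
  intro A hA
  have h1 := h A Aᶜ hA hA.compl
  have h2 := h Aᶜ A hA.compl hA
  have h3 := h1.add h2
  simp only [Set.inter_compl_self, Set.compl_inter_self, measure_empty, add_zero] at h3
  refine h3.congr fun n => ?_
  have hm := s.meas_pre (g n)⁻¹ hA
  rw [image_eq, image_eq, disp, measure_symmDiff_eq hm.nullMeasurableSet hA.nullMeasurableSet]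
  congr 2
  rw [Set.preimage_compl, Set.inter_comm]
  rfl

lemma Rig.weak [IsProbabilityMeasure s.μ] {g : ℕ → H3} (h : s.Rig g) (A B : Set s.X)
    (hA : MeasurableSet A) :
    Tendsto (fun n => s.μ (s.T (g n) '' A ∩ B)) atTop (𝓝 (s.μ (A ∩ B))) := by
  have h1 := h.inv A hA
  simp_rw [image_eq]
  refine tendsto_of_tendsto_of_tendsto_of_le_of_le
    (g := fun n => s.μ (A ∩ B) - s.disp (g n)⁻¹ A) (h := fun n => s.μ (A ∩ B) + s.disp (g n)⁻¹ A)
    ?_ ?_ ?_ ?_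
  · simpa using ENNReal.Tendsto.sub (tendsto_const_nhds (x := s.μ (A ∩ B))) h1
      (Or.inl (measure_ne_top _ _))
  · simpa using (tendsto_const_nhds (x := s.μ (A ∩ B))).add h1
  · intro n
    simp only [tsub_le_iff_right]
    refine (measure_mono ?_).trans (measure_union_le _ _)
    intro x hx
    by_cases hx' : x ∈ s.T (g n)⁻¹ ⁻¹' A
    · exact Or.inl ⟨hx', hx.2⟩
    · exact Or.inr (Or.inr ⟨hx.1, hx'⟩)
  · intro n
    refine (measure_mono ?_).trans (measure_union_le _ _)
    intro x hx
    by_cases hx' : x ∈ A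
    · exact Or.inl ⟨hx', hx.2⟩
    · exact Or.inr (Or.inl ⟨hx.1, hx'⟩)

lemma rig_of_hom [IsProbabilityMeasure s.μ] (f : ℝ → H3) (hf : ∀ t u, f (t + u) = f t * f u)
    (hfm : Measurable f) {t : ℕ → ℝ} (ht : Tendsto t atTop (𝓝 0)) :
    s.Rig (fun n => f (t n)) := by
  intro A hA
  exact (flow_cont s.μ (fun t => s.T (f t)) (fun t u x => by rw [hf, s.t_mul])
    (s.t_meas.comp (f := fun p : ℝ × s.X => (f p.1, p.2)) (by fun_prop))
    (fun t => s.t_mp _) A hA).comp ht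

end H3System

lemma H3.measurable_of {f : ℝ → H3} (hf : Measurable fun t => (f t).toProd) : Measurable f :=
  measurable_comap_iff.2 hf

lemma H3.tendsto_norm {g : ℕ → H3} (hg : Tendsto g atTop (cocompact H3)) :
    Tendsto (fun n => ‖(g n).toProd‖) atTop atTop := by
  have hind : IsInducing H3.toProd := ⟨rfl⟩
  have hcl : IsClosedEmbedding H3.toProd := by
    refine ⟨⟨hind, fun x y h => ?_⟩, ?_⟩
    · simp only [H3.toProd, Prod.mk.injEq] at h
      exact H3.ext h.1 h.2.1 h.2.2
    · have : Set.range H3.toProd = Set.univ :=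
        Set.range_eq_univ.2 fun p => ⟨H3.ofProd p, rfl⟩
      rw [this]; exact isClosed_univ
  exact tendsto_norm_cocompact_atTop.comp (hcl.tendsto_cocompact.comp hg)

lemma exists_subseq_atTop {u : ℕ → ℝ} (h : ¬ ∃ M, ∀ᶠ n in atTop, |u n| ≤ M) :
    ∃ φ : ℕ → ℕ, StrictMono φ ∧ Tendsto (fun n => |u (φ n)|) atTop atTop := by
  push Not at h
  obtain ⟨φ, hφ, h2⟩ := extraction_forall_of_frequently (P := fun n k => (n:ℝ) < |u k|)
    (fun n => h n)
  exact ⟨φ, hφ, tendsto_atTop_mono (fun n => (h2 n).le) tendsto_natCast_atTop_atTop⟩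

theorem exists_rig_central (s : H3System) [IsProbabilityMeasure s.μ] (g : ℕ → H3)
    (hg : Tendsto g atTop (cocompact H3)) (hr : s.Rig g) :
    ∃ t : ℕ → ℝ, Tendsto (fun n => |t n|) atTop atTop ∧ s.Rig (fun n => H3.C (t n)) := by
  by_cases ha : ∃ M, ∀ᶠ n in atTop, |(g n).a| ≤ M
  swap
  · obtain ⟨φ, hφ, h2⟩ := exists_subseq_atTop ha
    refine ⟨fun n => (g (φ n)).a, h2, ?_⟩
    have h3 := (hr.mul (hr.inv.conj (H3.B 1)⁻¹)).comp hφ.tendsto_atTop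
    convert h3 using 2 with n
    ext <;> simp [H3.B, H3.C] <;> ring
  by_cases hb : ∃ M, ∀ᶠ n in atTop, |(g n).b| ≤ M
  swap
  · obtain ⟨φ, hφ, h2⟩ := exists_subseq_atTop hb
    refine ⟨fun n => -(g (φ n)).b, by simpa using h2, ?_⟩
    have h3 := (hr.mul (hr.inv.conj (H3.A 1)⁻¹)).comp hφ.tendsto_atTop
    convert h3 using 2 with n
    ext <;> simp [H3.A, H3.C] <;> ring
  obtain ⟨Ma, ha⟩ := ha
  obtain ⟨Mb, hb⟩ := hb
  have hn := H3.tendsto_norm hg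
  have hc : Tendsto (fun n => |(g n).c|) atTop atTop := by
    rw [tendsto_atTop]
    intro M
    filter_upwards [ha, hb, hn.eventually_gt_atTop (max M (max Ma Mb))] with n h1 h2 h3
    simp only [H3.toProd, Prod.norm_def, Real.norm_eq_abs, lt_sup_iff, max_lt_iff] at h3
    rcases h3 with h3 | h3 | h3
    · linarith [h3.2.1]
    · linarith [h3.2.2]
    · exact h3.1.le
  obtain ⟨p, -, φ, hφ, hp⟩ := tendsto_subseq_of_frequently_bounded
    (s := Metric.closedBall (0 : ℝ × ℝ) (max Ma Mb)) (x := fun n => ((g n).a, (g n).b))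
    Metric.isBounded_closedBall (by
      refine Eventually.frequently ?_
      filter_upwards [ha, hb] with n h1 h2
      simp only [Metric.mem_closedBall, dist_zero_right, Prod.norm_def, Real.norm_eq_abs]
      exact max_le_max h1 h2)
  have hpa : Tendsto (fun n => (g (φ n)).a) atTop (𝓝 p.1) := (continuous_fst.tendsto p).comp hp
  have hpb : Tendsto (fun n => (g (φ n)).b) atTop (𝓝 p.2) := (continuous_snd.tendsto p).comp hp
  have hpc : Tendsto (fun n => |(g (φ n)).c|) atTop atTop := hc.comp hφ.tendsto_atTop
  have ha' : ∀ᶠ n in atTop, |(g (φ n)).a| ≤ Ma := hφ.tendsto_atTop.eventually ha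
  have hex : ∀ k : ℕ, ∃ m ≥ k, (k : ℝ) ≤ |(g (φ m) * (g (φ k))⁻¹).c| := by
    intro k
    have h1 := hpc.eventually_ge_atTop
      (k + |(g (φ k)).a * (g (φ k)).b - (g (φ k)).c| + Ma * |(g (φ k)).b|)
    obtain ⟨m, h1, h2, h3⟩ := (h1.and (ha'.and (eventually_ge_atTop k))).exists
    refine ⟨m, h3, ?_⟩
    simp only [H3.mul_c, H3.inv_c, H3.inv_b]
    generalize (g (φ k)).a * (g (φ k)).b - (g (φ k)).c = x at *
    generalize (g (φ k)).b = y at *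
    have h4 : |(g (φ m)).a * -y| ≤ Ma * |y| := by
      rw [abs_mul, abs_neg]
      exact mul_le_mul_of_nonneg_right h2 (abs_nonneg _)
    have h5 := abs_sub_abs_le_abs_sub (g (φ m)).c (-(x + (g (φ m)).a * -y))
    rw [abs_neg, sub_neg_eq_add, ← add_assoc] at h5
    linarith [abs_add_le x ((g (φ m)).a * -y)]
  choose ψ hψ hψc using hex
  have hψt : Tendsto ψ atTop atTop := tendsto_atTop_mono hψ tendsto_id
  have hr1 := hr.comp hφ.tendsto_atTop
  have hr2 := (hr1.comp hψt).mul hr1.inv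
  let h : ℕ → H3 := fun k => g (φ (ψ k)) * (g (φ k))⁻¹
  have hr3 : s.Rig h := hr2
  have ta : Tendsto (fun n => -(h n).a) atTop (𝓝 0) := by
    have := ((hpa.comp hψt).sub hpa).neg
    simpa [h, sub_eq_add_neg] using this
  have tb : Tendsto (fun n => -(h n).b) atTop (𝓝 0) := by
    have := ((hpb.comp hψt).sub hpb).neg
    simpa [h, sub_eq_add_neg] using this
  have rA : s.Rig (fun n => H3.A (-(h n).a)) :=
    H3System.rig_of_hom H3.A (fun t u => by ext <;> simp [H3.A])
      (H3.measurable_of (by simp only [H3.A, H3.toProd]; fun_prop)) ta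
  have rB : s.Rig (fun n => H3.B (-(h n).b)) :=
    H3System.rig_of_hom H3.B (fun t u => by ext <;> simp [H3.B])
      (H3.measurable_of (by simp only [H3.B, H3.toProd]; fun_prop)) tb
  refine ⟨fun n => (h n).c, tendsto_atTop_mono hψc tendsto_natCast_atTop_atTop, ?_⟩
  convert (hr3.mul rA).mul rB using 2 with n
  ext <;> simp [H3.A, H3.B, H3.C]

/-- **Corollary 3.8(iv).** Let `T` be a measure-preserving action of `H₃(ℝ)` on a standard
probability space whose central flow `(T_{c(t)})_{t∈ℝ}` is ergodic. If `T` is rigid, then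
the central flow `{T_{c(t)} : t ∈ ℝ}` is rigid: there are reals `tₙ` with `|tₙ| → ∞` and
`μ(T_{c(tₙ)}A ∩ B) → μ(A ∩ B)` for all measurable `A, B`. -/
theorem central_flow_rigid_of_rigid (s : H3System) (hstd : s.IsStdProb)
    (herg : s.CentralErgodic) (hrig : s.Rigid) :
    ∃ t : ℕ → ℝ, Tendsto (fun n => |t n|) atTop atTop ∧
      ∀ A B : Set s.X, MeasurableSet A → MeasurableSet B →
        Tendsto (fun n => s.μ (s.T (H3.C (t n)) '' A ∩ B)) atTop (𝓝 (s.μ (A ∩ B))) := by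
  haveI : IsProbabilityMeasure s.μ := hstd.2
  obtain ⟨g, hg, hw⟩ := hrig
  obtain ⟨t, ht, hr⟩ := exists_rig_central s g hg (H3System.rig_of_weak hw)
  exact ⟨t, ht, fun A B hA _ => hr.weak A B hA⟩

end Statement
end

section
/- Let T be a measure-preserving action of H₃(ℝ) on a standard probability space (X, ℬ, μ). If the central flow (T_{c(t)})_{t∈ℝ} is weakly mixing, then for every k ≥ 1 the flows (T_{a(t)})_{t∈ℝ} and (T_{b(t)})_{t∈ℝ} are mixing of order k. -/
open Filter Topology Pointwise

section Statement
open MeasureTheory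

/-- The central flow `(T_{c(t)})_{t∈ℝ}` is weakly mixing: its diagonal product with itself
on `(X × X, μ × μ)` is ergodic. -/
def H3System.CentralWeaklyMixing (s : H3System) : Prop :=
  ∀ A : Set (s.X × s.X), MeasurableSet A →
    (∀ t : ℝ, (fun p : s.X × s.X => (s.T (H3.C t) p.1, s.T (H3.C t) p.2)) ⁻¹' A = A) →
    (s.μ.prod s.μ) A = 0 ∨ (s.μ.prod s.μ) Aᶜ = 0


theorem hil_aux {E : Type*} [NormedAddCommGroup E] [InnerProductSpace ℝ E] [CompleteSpace E]
    (V : ℝ → E →ₗᵢ[ℝ] E) (hV : ∀ u v x, V u (V v x) = V (u + v) x) (f : E)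
    (hf : ∀ w, (∀ u, V u w = w) → inner ℝ f w = 0) (h : E) (ε : ℝ) (hε : 0 < ε) :
    ∃ u, inner ℝ (V u f) h < ε := by
  by_contra hcon
  push Not at hcon
  set K := closure (convexHull ℝ (Set.range fun u => V u f)) with hK
  have hKc : Convex ℝ K := (convex_convexHull ℝ _).closure
  have hKcl : IsClosed K := isClosed_closure
  have hKne : K.Nonempty :=
    ⟨V 0 f, subset_closure (subset_convexHull ℝ _ ⟨0, rfl⟩)⟩
  have hmin : ∀ C : Set E, IsClosed C → Convex ℝ C → (∀ u, V u f ∈ C) → K ⊆ C := by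
    intro C h1 h2 h3
    apply closure_minimal _ h1
    apply convexHull_min _ h2
    rintro _ ⟨u, rfl⟩
    exact h3 u
  have hVK : ∀ u, ∀ x ∈ K, V u x ∈ K := by
    intro u
    apply hmin (V u ⁻¹' K) (hKcl.preimage (V u).continuous)
      (hKc.linear_preimage (V u).toLinearMap)
    intro v
    simp only [Set.mem_preimage, hV]
    exact subset_closure (subset_convexHull ℝ _ ⟨u + v, rfl⟩)
  obtain ⟨v, hvK, hv⟩ := exists_norm_eq_iInf_of_complete_convex hKne hKcl.isComplete hKc 0
  have hv2 := (norm_eq_iInf_iff_real_inner_le_zero hKc hvK).1 hv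
  have hinv : ∀ u, V u v = v := by
    intro u
    have h1 := hv2 (V u v) (hVK u v hvK)
    have h2 : ‖V u v‖ = ‖v‖ := (V u).norm_map v
    have h3 := norm_sub_sq_real (V u v) v
    simp only [zero_sub, inner_neg_left, inner_sub_right, real_inner_self_eq_norm_sq] at h1
    rw [real_inner_comm] at h1
    have h4 : ‖V u v - v‖ ^ 2 ≤ 0 := by rw [h3, h2]; linarith
    have h5 : ‖V u v - v‖ = 0 := by nlinarith [norm_nonneg (V u v - v)]
    exact sub_eq_zero.1 (norm_eq_zero.1 h5)
  have hperp : ∀ x ∈ K, inner ℝ x v = 0 := by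
    have := hmin {x | inner ℝ x v = 0} (isClosed_eq (by fun_prop) (by fun_prop)) ?_ ?_
    · exact this
    · intro x hx y hy a b _ _ _
      simp only [Set.mem_ofPred_eq] at *
      rw [inner_add_left, real_inner_smul_left, real_inner_smul_left, hx, hy]; simp
    · intro u
      have : inner ℝ (V u f) (V u v) = inner ℝ f v := (V u).inner_map_map f v
      rw [hinv u] at this
      simp only [Set.mem_ofPred_eq]
      rw [this]; exact hf v hinv
  have hv0 : v = 0 := by
    have := hperp v hvK
    exact inner_self_eq_zero.1 this
  have hge := hmin {x | ε ≤ inner ℝ x h} (isClosed_le (by fun_prop) (by fun_prop)) ?_ hcon hvK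
  · simp [hv0] at hge; linarith
  · intro x hx y hy a b ha hb hab
    simp only [Set.mem_ofPred_eq] at *
    rw [inner_add_left, real_inner_smul_left, real_inner_smul_left]
    calc ε = a * ε + b * ε := by rw [← add_mul, hab, one_mul]
      _ ≤ _ := by gcongr

/-- several commuting speeds at once -/
theorem hil_aux_pi {E κ : Type*} [NormedAddCommGroup E] [InnerProductSpace ℝ E] [CompleteSpace E]
    [Fintype κ]
    (V : ℝ → E →ₗᵢ[ℝ] E) (hV : ∀ u v x, V u (V v x) = V (u + v) x) (θ : κ → ℝ) (hθ : ∀ k, θ k ≠ 0)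
    (f : κ → E)
    (hf : ∀ k, ∀ w, (∀ u, V u w = w) → inner ℝ (f k) w = 0) (h : κ → E) (ε : ℝ) (hε : 0 < ε) :
    ∃ u, ∑ k, inner ℝ (V (θ k * u) (f k)) (h k) < ε := by
  let W : ℝ → PiLp 2 (fun _ : κ => E) →ₗᵢ[ℝ] PiLp 2 (fun _ : κ => E) := fun u =>
    { toFun := fun x => WithLp.toLp 2 fun k => V (θ k * u) (x k)
      map_add' := by intro x y; ext k; simp
      map_smul' := by intro c x; ext k; simp
      norm_map' := by
        intro x
        simp [PiLp.norm_eq_of_L2] }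
  have hW : ∀ u x k, W u x k = V (θ k * u) (x k) := fun _ _ _ => rfl
  have h1 : ∀ u v x, W u (W v x) = W (u + v) x := by
    intro u v x
    ext k
    simp only [hW, hV, mul_add]
  have h2 : ∀ w, (∀ u, W u w = w) → inner ℝ (WithLp.toLp 2 f) w = 0 := by
    intro w hw
    simp only [PiLp.inner_apply]
    apply Finset.sum_eq_zero
    intro k _
    apply hf
    intro u
    have := congrArg (fun z : PiLp 2 (fun _ : κ => E) => z k) (hw (u / θ k))
    simp only [hW] at this
    rwa [mul_div_cancel₀ _ (hθ k)] at this
  obtain ⟨u, hu⟩ := hil_aux W h1 (WithLp.toLp 2 f) h2 (WithLp.toLp 2 h) ε hε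
  refine ⟨u, ?_⟩
  simpa [PiLp.inner_apply, hW] using hu

/-! ### Basic facts on the translated sets -/

/-- The translate `T_g A`, written as a preimage. -/
def H3System.pre (s : H3System) (g : H3) (A : Set s.X) : Set s.X := s.T g⁻¹ ⁻¹' A

theorem H3System.image_eq_pre (s : H3System) (g : H3) (A : Set s.X) : s.T g '' A = s.pre g A := by
  ext x
  constructor
  · rintro ⟨y, hy, rfl⟩
    change s.T g⁻¹ (s.T g y) ∈ A
    rw [← s.t_mul, inv_mul_cancel, s.t_one]; exact hy
  · intro hx
    refine ⟨s.T g⁻¹ x, hx, ?_⟩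
    rw [← s.t_mul, mul_inv_cancel, s.t_one]

theorem H3System.pre_one_s12 (s : H3System) (A : Set s.X) : s.pre 1 A = A := by
  ext x; simp [H3System.pre, s.t_one]

theorem H3System.pre_mul_s12 (s : H3System) (g h : H3) (A : Set s.X) :
    s.pre (g * h) A = s.pre g (s.pre h A) := by
  ext x; simp [H3System.pre, s.t_mul]

theorem H3System.pre_inter (s : H3System) (g : H3) (A B : Set s.X) :
    s.pre g (A ∩ B) = s.pre g A ∩ s.pre g B := rfl

theorem H3System.pre_symmDiff (s : H3System) (g : H3) (A B : Set s.X) :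
    s.pre g (symmDiff A B) = symmDiff (s.pre g A) (s.pre g B) := rfl

theorem H3System.pre_meas (s : H3System) (g : H3) {A : Set s.X} (hA : MeasurableSet A) :
    MeasurableSet (s.pre g A) := (s.t_mp g⁻¹).measurable hA

theorem H3System.measure_pre (s : H3System) (g : H3) {A : Set s.X} (hA : MeasurableSet A) :
    s.μ (s.pre g A) = s.μ A := (s.t_mp g⁻¹).measure_preimage hA.nullMeasurableSet

theorem H3System.real_pre (s : H3System) (g : H3) {A : Set s.X} (hA : MeasurableSet A) :
    s.μ.real (s.pre g A) = s.μ.real A := by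
  simp only [Measure.real, s.measure_pre g hA]

/-- The abelian subgroup of elements `b(β)c(γ)`. -/
def H3.bc (p : ℝ × ℝ) : H3 := ⟨0, p.1, p.2⟩

theorem H3.bc_add (p q : ℝ × ℝ) : H3.bc (p + q) = H3.bc p * H3.bc q := by
  ext <;> simp [H3.bc]

theorem H3.bc_inv (p : ℝ × ℝ) : (H3.bc p)⁻¹ = H3.bc (-p) := by
  ext <;> simp [H3.bc]

theorem H3.measurable_of_s12 {α : Type*} [MeasurableSpace α] {f : α → H3}
    (ha : Measurable fun x => (f x).a) (hb : Measurable fun x => (f x).b)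
    (hc : Measurable fun x => (f x).c) : Measurable f := by
  rw [measurable_comap_iff]
  exact ha.prodMk (hb.prodMk hc)

theorem H3.measurable_bc : Measurable H3.bc :=
  H3.measurable_of_s12 (by simp only [H3.bc]; fun_prop) (by simp only [H3.bc]; fun_prop)
    (by simp only [H3.bc]; fun_prop)

theorem H3.measurable_C : Measurable H3.C :=
  H3.measurable_of_s12 (by simp only [H3.C]; fun_prop) (by simp only [H3.C]; fun_prop)
    (by simp only [H3.C]; fun_prop)

/-- Automatic continuity of the `bc`-action. -/
theorem H3System.tendsto_bc (s : H3System) (hstd : s.IsStdProb) {A : Set s.X}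
    (hA : MeasurableSet A) :
    Tendsto (fun p : ℝ × ℝ => s.μ.real (symmDiff (s.pre (H3.bc p) A) A)) (𝓝 0) (𝓝 0) := by
  obtain ⟨h1, h2⟩ := hstd
  obtain ⟨𝒜, hcount, hdense⟩ := exists_countable_measureDense (μ := s.μ)
  have key : ∀ ε : ℝ, 0 < ε →
      ∀ᶠ p in 𝓝 (0 : ℝ × ℝ), s.μ.real (symmDiff (s.pre (H3.bc p) A) A) < ε := by
    intro ε hε
    let S : Set s.X → Set (ℝ × ℝ) := fun D =>
      {p | s.μ (symmDiff (s.pre (H3.bc p) A) D) < ENNReal.ofReal (ε / 2)}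
    have hSm : ∀ D ∈ 𝒜, MeasurableSet (S D) := by
      intro D hD
      have hD := hdense.measurable D hD
      have hm : MeasurableSet {q : (ℝ × ℝ) × s.X | s.T (H3.bc q.1)⁻¹ q.2 ∈ A} := by
        have : Measurable fun q : (ℝ × ℝ) × s.X => s.T (H3.bc q.1)⁻¹ q.2 := by
          simp only [H3.bc_inv]
          exact s.t_meas.comp ((H3.measurable_bc.comp measurable_fst.neg).prodMk measurable_snd)
        exact this hA
      have hm2 := measurable_measure_prodMk_left (ν := s.μ)
        (hm.symmDiff (measurable_snd hD : MeasurableSet ((Prod.snd : (ℝ × ℝ) × s.X → s.X) ⁻¹' D)))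
      exact measurableSet_lt hm2 measurable_const
    have hcov : (⋃ D ∈ 𝒜, S D) = Set.univ := by
      rw [Set.eq_univ_iff_forall]
      intro p
      obtain ⟨D, hD, hlt⟩ := hdense.approx (s.pre (H3.bc p) A) (s.pre_meas _ hA)
        (measure_ne_top _ _) (ε / 2) (by positivity)
      exact Set.mem_biUnion hD hlt
    have hpos : ∃ D ∈ 𝒜, 0 < (volume : Measure (ℝ × ℝ)) (S D) := by
      by_contra hcon
      push Not at hcon
      have h0 : (volume : Measure (ℝ × ℝ)) (⋃ D ∈ 𝒜, S D) = 0 :=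
        (measure_biUnion_null_iff hcount).2 fun D hD => le_antisymm (hcon D hD) bot_le
      rw [hcov] at h0
      simp at h0
    obtain ⟨D, hD, hDpos⟩ := hpos
    have hst := Measure.sub_mem_nhds_zero_of_addHaar_pos (volume : Measure (ℝ × ℝ)) (S D)
      (hSm D hD) hDpos
    filter_upwards [hst] with p hp
    obtain ⟨q, hq, r, hr, rfl⟩ := hp
    have e1 : s.μ (symmDiff (s.pre (H3.bc (q - r)) A) A)
        = s.μ (symmDiff (s.pre (H3.bc q) A) (s.pre (H3.bc r) A)) := by
      rw [← s.measure_pre (H3.bc r) ((s.pre_meas _ hA).symmDiff hA), s.pre_symmDiff, ← s.pre_mul_s12,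
        ← H3.bc_add]
      simp
    have e2 : s.μ (symmDiff (s.pre (H3.bc q) A) (s.pre (H3.bc r) A)) < ENNReal.ofReal ε := by
      calc _ ≤ _ := measure_symmDiff_le _ D _
        _ < ENNReal.ofReal (ε / 2) + ENNReal.ofReal (ε / 2) := by
            apply ENNReal.add_lt_add hq
            rw [symmDiff_comm]; exact hr
        _ = ENNReal.ofReal ε := by
            rw [← ENNReal.ofReal_add (by positivity) (by positivity)]; simp
    rw [Measure.real, e1]
    exact (ENNReal.lt_ofReal_iff_toReal_lt (measure_ne_top _ _)).1 e2
  rw [Metric.tendsto_nhds]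
  intro ε hε
  filter_upwards [key ε hε] with p hp
  rw [Real.dist_eq, sub_zero, abs_of_nonneg measureReal_nonneg]
  exact hp

/-! ### Invariant functions of the square of the central flow -/

/-- The diagonal central flow. -/
def H3System.TT (s : H3System) (u : ℝ) (p : s.X × s.X) : s.X × s.X :=
  (s.T (H3.C u) p.1, s.T (H3.C u) p.2)

theorem H3.C_add (u v : ℝ) : H3.C (u + v) = H3.C u * H3.C v := by
  ext <;> simp [H3.C]

theorem H3.C_inv (u : ℝ) : (H3.C u)⁻¹ = H3.C (-u) := by
  ext <;> simp [H3.C]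

theorem H3System.TT_add (s : H3System) (u v : ℝ) (p : s.X × s.X) :
    s.TT (u + v) p = s.TT u (s.TT v p) := by
  simp [H3System.TT, H3.C_add, s.t_mul]

theorem H3System.TT_mp (s : H3System) [IsProbabilityMeasure s.μ] (u : ℝ) :
    MeasurePreserving (s.TT u) (s.μ.prod s.μ) (s.μ.prod s.μ) :=
  (s.t_mp (H3.C u)).prod (s.t_mp (H3.C u))

theorem H3System.TT_meas (s : H3System) :
    Measurable fun q : (s.X × s.X) × ℝ => s.TT q.2 q.1 := by
  unfold H3System.TT
  have h1 : Measurable fun q : (s.X × s.X) × ℝ => s.T (H3.C q.2) q.1.1 :=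
    s.t_meas.comp ((H3.measurable_C.comp measurable_snd).prodMk (measurable_fst.comp measurable_fst))
  have h2 : Measurable fun q : (s.X × s.X) × ℝ => s.T (H3.C q.2) q.1.2 :=
    s.t_meas.comp ((H3.measurable_C.comp measurable_snd).prodMk (measurable_snd.comp measurable_fst))
  exact h1.prodMk h2

/-- Ergodicity for almost invariant sets. -/
theorem H3System.ae_inv_set (s : H3System) [IsProbabilityMeasure s.μ]
    (hwm : s.CentralWeaklyMixing) {A : Set (s.X × s.X)} (hA : MeasurableSet A)
    (hinv : ∀ u, s.TT u ⁻¹' A =ᵐ[s.μ.prod s.μ] A) :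
    (∀ᵐ p ∂(s.μ.prod s.μ), p ∈ A) ∨ (∀ᵐ p ∂(s.μ.prod s.μ), p ∉ A) := by
  let A' : Set (s.X × s.X) := {p | (volume : Measure ℝ) {u | s.TT u p ∉ A} = 0}
  have hQ : MeasurableSet {q : (s.X × s.X) × ℝ | s.TT q.2 q.1 ∉ A} := s.TT_meas hA.compl
  have hA'm : MeasurableSet A' :=
    measurable_measure_prodMk_left (ν := (volume : Measure ℝ)) hQ (measurableSet_singleton 0)
  have hA'inv : ∀ t : ℝ, s.TT t ⁻¹' A' = A' := by
    intro t
    ext p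
    have : {u | s.TT u (s.TT t p) ∉ A} = (fun u => u + t) ⁻¹' {u | s.TT u p ∉ A} := by
      ext u; simp [s.TT_add]
    change volume {u | s.TT u (s.TT t p) ∉ A} = 0 ↔ volume {u | s.TT u p ∉ A} = 0
    rw [this, measure_preimage_add_right]
  have hR : MeasurableSet {q : (s.X × s.X) × ℝ | (s.TT q.2 q.1 ∈ A ↔ q.1 ∈ A)} := by
    have h1 : MeasurableSet {q : (s.X × s.X) × ℝ | s.TT q.2 q.1 ∈ A} := s.TT_meas hA
    have h2 : MeasurableSet {q : (s.X × s.X) × ℝ | q.1 ∈ A} := measurable_fst hA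
    exact h1.iff h2
  have hae : ∀ᵐ p ∂(s.μ.prod s.μ), ∀ᵐ u ∂(volume : Measure ℝ), (s.TT u p ∈ A ↔ p ∈ A) := by
    have := (Measure.ae_ae_comm (μ := s.μ.prod s.μ) (ν := (volume : Measure ℝ))
      (p := fun p u => (s.TT u p ∈ A ↔ p ∈ A)) hR).2
    apply this
    filter_upwards with u
    filter_upwards [hinv u] with p hp
    exact Iff.of_eq hp
  have hAA' : ∀ᵐ p ∂(s.μ.prod s.μ), (p ∈ A' ↔ p ∈ A) := by
    filter_upwards [hae] with p hp
    constructor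
    · intro h
      have h' : ∀ᵐ u ∂(volume : Measure ℝ), s.TT u p ∈ A := h
      obtain ⟨u, hu1, hu2⟩ := (h'.and hp).exists
      exact hu2.1 hu1
    · intro h
      have h' : ∀ᵐ u ∂(volume : Measure ℝ), s.TT u p ∈ A := by
        filter_upwards [hp] with u hu using hu.2 h
      exact h'
  rcases hwm A' hA'm hA'inv with h | h
  · right
    have h' : ∀ᵐ p ∂(s.μ.prod s.μ), p ∉ A' := measure_eq_zero_iff_ae_notMem.1 h
    filter_upwards [h', hAA'] with p h1 h2
    rwa [← h2]
  · left
    have h' : ∀ᵐ p ∂(s.μ.prod s.μ), p ∈ A' := by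
      have := measure_eq_zero_iff_ae_notMem.1 h
      filter_upwards [this] with p hp
      simpa using hp
    filter_upwards [h', hAA'] with p h1 h2
    rwa [← h2]

/-- Almost invariant functions are almost everywhere constant. -/
theorem H3System.ae_const (s : H3System) [IsProbabilityMeasure s.μ]
    (hwm : s.CentralWeaklyMixing) {g : s.X × s.X → ℝ} (hg : Measurable g)
    (hinv : ∀ u, g ∘ s.TT u =ᵐ[s.μ.prod s.μ] g) :
    ∃ c : ℝ, g =ᵐ[s.μ.prod s.μ] fun _ => c := by
  refine exists_eventuallyEq_const_of_forall_separating MeasurableSet fun U hU => ?_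
  apply s.ae_inv_set hwm (hg hU)
  intro u
  filter_upwards [hinv u] with p hp
  have : g (s.TT u p) = g p := hp
  change (g (s.TT u p) ∈ U) = (g p ∈ U)
  rw [this]

/-! ### The key weak mixing lemma -/

/-- Real-valued indicator function. -/
noncomputable def ind01 {X : Type*} (A : Set X) (x : X) : ℝ := A.indicator (fun _ => (1 : ℝ)) x

theorem ind01_meas {X : Type*} [MeasurableSpace X] {A : Set X} (hA : MeasurableSet A) :
    Measurable (ind01 A) := measurable_const.indicator hA

theorem ind01_bound {X : Type*} (A : Set X) (x : X) : 0 ≤ ind01 A x ∧ ind01 A x ≤ 1 := by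
  unfold ind01
  by_cases h : x ∈ A <;> simp [h]

theorem ind01_mul {X : Type*} (A B : Set X) (x : X) :
    ind01 A x * ind01 B x = ind01 (A ∩ B) x := by
  unfold ind01
  by_cases h : x ∈ A <;> by_cases h' : x ∈ B <;> simp [h, h']

theorem ind01_integrable {X : Type*} [MeasurableSpace X] {μ : Measure X} [IsProbabilityMeasure μ]
    {A : Set X} (hA : MeasurableSet A) : Integrable (ind01 A) μ :=
  (integrable_const (1 : ℝ)).indicator hA

theorem ind01_integral {X : Type*} [MeasurableSpace X] {μ : Measure X}
    {A : Set X} (hA : MeasurableSet A) : ∫ x, ind01 A x ∂μ = μ.real A := by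
  unfold ind01
  rw [integral_indicator hA]; simp

theorem integral_ind_mul {X : Type*} [MeasurableSpace X] {μ : Measure X} [IsProbabilityMeasure μ]
    {A B : Set X} (hA : MeasurableSet A) (hB : MeasurableSet B) (c d : ℝ) :
    ∫ x, (ind01 A x - c) * (ind01 B x - d) ∂μ
      = μ.real (A ∩ B) - c * μ.real B - d * μ.real A + c * d := by
  have e : ∀ x, (ind01 A x - c) * (ind01 B x - d)
      = ind01 (A ∩ B) x - c * ind01 B x - d * ind01 A x + c * d := by
    intro x; rw [← ind01_mul]; ring
  simp only [e]
  have i1 : Integrable (fun x => ind01 (A ∩ B) x) μ := ind01_integrable (hA.inter hB)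
  have i2 := (ind01_integrable (μ := μ) hB).const_mul c
  have i3 := (ind01_integrable (μ := μ) hA).const_mul d
  have i4 : Integrable (fun x => ind01 (A ∩ B) x - c * ind01 B x) μ := i1.sub i2
  have i5 : Integrable (fun x => ind01 (A ∩ B) x - c * ind01 B x - d * ind01 A x) μ := i4.sub i3
  rw [integral_add i5 (integrable_const _), integral_sub i4 i3,
    integral_sub i1 i2, integral_const_mul, integral_const_mul, ind01_integral (hA.inter hB),
    ind01_integral hA, ind01_integral hB]
  simp

/-- The function `(1_A - μ A) ⊗ (1_A - μ A)`. -/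
noncomputable def H3System.ten (s : H3System) (A : Set s.X) (p : s.X × s.X) : ℝ :=
  (ind01 A p.1 - s.μ.real A) * (ind01 A p.2 - s.μ.real A)

theorem H3System.ten_memLp (s : H3System) [IsProbabilityMeasure s.μ] {A : Set s.X}
    (hA : MeasurableSet A) : MemLp (s.ten A) 2 (s.μ.prod s.μ) := by
  have hm : Measurable (s.ten A) := by
    unfold H3System.ten
    have := ind01_meas hA
    fun_prop
  refine MemLp.of_bound hm.aestronglyMeasurable 1 ?_
  filter_upwards with p
  have h1 := ind01_bound A p.1
  have h2 := ind01_bound A p.2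
  have h3 : 0 ≤ s.μ.real A := measureReal_nonneg
  have h4 : s.μ.real A ≤ 1 := measureReal_le_one
  unfold H3System.ten
  rw [Real.norm_eq_abs, abs_mul]
  apply mul_le_one₀ _ (abs_nonneg _) _ <;> rw [abs_le] <;> constructor <;> linarith

theorem H3System.weak_mixing_key (s : H3System) [IsProbabilityMeasure s.μ]
    (hwm : s.CentralWeaklyMixing) {κ : Type*} [Fintype κ] (θ : κ → ℝ) (hθ : ∀ k, θ k ≠ 0)
    (A B : κ → Set s.X) (hA : ∀ k, MeasurableSet (A k)) (hB : ∀ k, MeasurableSet (B k))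
    (ε : ℝ) (hε : 0 < ε) :
    ∃ u : ℝ, ∀ k, |s.μ.real (B k ∩ s.pre (H3.C (u * θ k)) (A k))
      - s.μ.real (B k) * s.μ.real (A k)| < ε := by
  let ν := s.μ.prod s.μ
  let V : ℝ → Lp ℝ 2 ν →ₗᵢ[ℝ] Lp ℝ 2 ν := fun u =>
    Lp.compMeasurePreservingₗᵢ ℝ (s.TT u) (s.TT_mp u)
  have hVcoe : ∀ u x, V u x =ᵐ[ν] x ∘ s.TT u := fun u x =>
    Lp.coeFn_compMeasurePreserving x (s.TT_mp u)
  have hV : ∀ u v x, V u (V v x) = V (u + v) x := by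
    intro u v x
    apply Lp.ext
    have h1 := (s.TT_mp u).quasiMeasurePreserving.ae_eq_comp (hVcoe v x)
    refine (hVcoe u _).trans (h1.trans ?_)
    refine EventuallyEq.trans ?_ (hVcoe (u + v) x).symm
    filter_upwards with p
    simp only [Function.comp_apply]
    rw [add_comm, s.TT_add]
  let f : κ → Lp ℝ 2 ν := fun k => (s.ten_memLp (hA k)).toLp _
  let h : κ → Lp ℝ 2 ν := fun k => (s.ten_memLp (hB k)).toLp _
  have hf : ∀ k, ∀ w, (∀ u, V u w = w) → inner ℝ (f k) w = 0 := by
    intro k w hw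
    have hwm' : ∀ u, (w : s.X × s.X → ℝ) ∘ s.TT u =ᵐ[ν] w := by
      intro u
      have := hVcoe u w
      rw [hw u] at this
      exact this.symm
    obtain ⟨c, hc⟩ := s.ae_const hwm (Lp.stronglyMeasurable w).measurable hwm'
    rw [L2.inner_def]
    have : ∫ p, inner ℝ (f k p) (w p) ∂ν = ∫ p, c * s.ten (A k) p ∂ν := by
      apply integral_congr_ae
      filter_upwards [hc, (s.ten_memLp (hA k)).coeFn_toLp] with p h1 h2
      rw [h1, h2]; simp
    rw [this, integral_const_mul]
    have h0 : ∫ x, (ind01 (A k) x - s.μ.real (A k)) ∂s.μ = 0 := by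
      rw [integral_sub (ind01_integrable (hA k)) (integrable_const _), ind01_integral (hA k)]
      simp
    have : ∫ p, s.ten (A k) p ∂ν = 0 := by
      unfold H3System.ten
      rw [integral_prod_mul (μ := s.μ) (ν := s.μ) (fun x => ind01 (A k) x - s.μ.real (A k))
        (fun x => ind01 (A k) x - s.μ.real (A k)), h0, zero_mul]
    rw [this, mul_zero]
  have hinner : ∀ k u, inner ℝ (V u (f k)) (h k)
      = (s.μ.real (B k ∩ s.pre (H3.C (-u)) (A k)) - s.μ.real (B k) * s.μ.real (A k)) ^ 2 := by
    intro k u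
    rw [L2.inner_def]
    have e1 : ∫ p, inner ℝ (V u (f k) p) (h k p) ∂ν
        = ∫ p, ((ind01 (s.pre (H3.C (-u)) (A k)) p.1 - s.μ.real (A k)) *
                (ind01 (B k) p.1 - s.μ.real (B k))) *
               ((ind01 (s.pre (H3.C (-u)) (A k)) p.2 - s.μ.real (A k)) *
                (ind01 (B k) p.2 - s.μ.real (B k))) ∂ν := by
      apply integral_congr_ae
      have h1 := (s.TT_mp u).quasiMeasurePreserving.ae_eq_comp (s.ten_memLp (hA k)).coeFn_toLp
      filter_upwards [hVcoe u (f k), h1, (s.ten_memLp (hB k)).coeFn_toLp] with p h1 h2 h3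
      rw [h1, h2, h3]
      have e : ∀ x, ind01 (s.pre (H3.C (-u)) (A k)) x = ind01 (A k) (s.T (H3.C u) x) := by
        intro x
        simp only [ind01, H3System.pre, H3.C_inv, neg_neg]
        rfl
      simp only [e, Function.comp_apply, H3System.ten, H3System.TT]
      simp
      ring
    rw [e1, integral_prod_mul (μ := s.μ) (ν := s.μ)
        (fun x => (ind01 (s.pre (H3.C (-u)) (A k)) x - s.μ.real (A k)) *
                (ind01 (B k) x - s.μ.real (B k)))
        (fun x => (ind01 (s.pre (H3.C (-u)) (A k)) x - s.μ.real (A k)) *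
                (ind01 (B k) x - s.μ.real (B k))),
        integral_ind_mul (s.pre_meas _ (hA k)) (hB k), s.real_pre _ (hA k), Set.inter_comm (B k)]
    ring
  obtain ⟨u, hu⟩ := hil_aux_pi V hV θ hθ f hf h (ε ^ 2) (by positivity)
  refine ⟨-u, fun k => ?_⟩
  simp only [hinner] at hu
  have h1 := Finset.single_le_sum (s := Finset.univ) (f := fun k =>
    (s.μ.real (B k ∩ s.pre (H3.C (-(θ k * u))) (A k)) - s.μ.real (B k) * s.μ.real (A k)) ^ 2)
    (fun _ _ => sq_nonneg _) (Finset.mem_univ k)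
  have h2 : -u * θ k = -(θ k * u) := by ring
  rw [h2]
  exact abs_lt_of_sq_lt_sq (lt_of_le_of_lt h1 hu) hε.le

/-! ### A van der Corput type estimate -/

theorem vdc_aux {X : Type*} [MeasurableSpace X] {μ : Measure X} [IsProbabilityMeasure μ]
    {E : Set X} (hE : MeasurableSet E) (N : ℕ) (G : ℕ → Set X) (hG : ∀ k, MeasurableSet (G k))
    (c m ε : ℝ) (hε : 0 ≤ ε) (hc0 : 0 ≤ c) (hc1 : c ≤ 1)
    (h1 : ∀ k < N, |μ.real (G k) - c| ≤ ε)
    (h2 : ∀ k < N, ∀ l < N, k ≠ l → |μ.real (G k ∩ G l) - c ^ 2| ≤ ε)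
    (h3 : ∀ k < N, |μ.real (E ∩ G k) - m| ≤ ε) :
    (N * (|m - c * μ.real E| - ε)) ≤ Real.sqrt (N * 4 + N ^ 2 * (3 * ε)) := by
  let g : X → ℝ := fun x => ∑ k ∈ Finset.range N, (ind01 (G k) x - c)
  have hgm : Measurable g := Finset.measurable_sum _ fun k _ => (ind01_meas (hG k)).sub_const c
  have hgb : ∀ x, |g x| ≤ N := by
    intro x
    calc |g x| ≤ ∑ k ∈ Finset.range N, |ind01 (G k) x - c| := Finset.abs_sum_le_sum_abs _ _
      _ ≤ ∑ k ∈ Finset.range N, 1 := by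
        apply Finset.sum_le_sum
        intro k _
        have := ind01_bound (G k) x
        rw [abs_le]; constructor <;> linarith
      _ = N := by simp
  have hgi : Integrable g μ := Integrable.of_bound hgm.aestronglyMeasurable N (by
    filter_upwards with x using hgb x)
  have hg2i : Integrable (fun x => g x ^ 2) μ :=
    Integrable.of_bound (hgm.pow_const 2).aestronglyMeasurable ((N : ℝ) ^ 2) (by
      filter_upwards with x
      rw [norm_pow]
      exact pow_le_pow_left₀ (norm_nonneg _) (hgb x) 2)
  have hi : ∀ k l, Integrable (fun x => (ind01 (G k) x - c) * (ind01 (G l) x - c)) μ := by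
    intro k l
    refine Integrable.of_bound
      (((ind01_meas (hG k)).sub_const c).mul ((ind01_meas (hG l)).sub_const c)).aestronglyMeasurable
      1 ?_
    filter_upwards with x
    have a1 := ind01_bound (G k) x
    have a2 := ind01_bound (G l) x
    rw [Real.norm_eq_abs, abs_mul]
    apply mul_le_one₀ _ (abs_nonneg _) _ <;> rw [abs_le] <;> constructor <;> linarith
  -- second moment
  have hsq : ∫ x, g x ^ 2 ∂μ ≤ N * 4 + N ^ 2 * (3 * ε) := by
    have e : ∀ x, g x ^ 2 = ∑ k ∈ Finset.range N, ∑ l ∈ Finset.range N,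
        (ind01 (G k) x - c) * (ind01 (G l) x - c) := by
      intro x
      simp only [g, sq, Finset.sum_mul_sum]
    simp only [e]
    rw [integral_finsetSum _ (fun k _ => integrable_finsetSum _ fun l _ => hi k l)]
    simp only [integral_finsetSum _ (fun l _ => hi _ l), integral_ind_mul (hG _) (hG _)]
    calc _ ≤ ∑ k ∈ Finset.range N, ∑ l ∈ Finset.range N, ((if k = l then 4 else 0) + 3 * ε) := by
          apply Finset.sum_le_sum
          intro k hk
          apply Finset.sum_le_sum
          intro l hl
          rw [Finset.mem_range] at hk hl
          have a1 := abs_le.1 (h1 k hk)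
          have a2 := abs_le.1 (h1 l hl)
          by_cases hkl : k = l
          · have b1 : μ.real (G k ∩ G l) ≤ 1 := measureReal_le_one
            have b2 : 0 ≤ μ.real (G k) := measureReal_nonneg
            have b3 : 0 ≤ μ.real (G l) := measureReal_nonneg
            simp only [if_pos hkl]
            nlinarith
          · have a3 := abs_le.1 (h2 k hk l hl hkl)
            simp only [if_neg hkl]
            nlinarith
      _ = N * 4 + N ^ 2 * (3 * ε) := by
          simp only [Finset.sum_add_distrib, Finset.sum_ite_eq, Finset.sum_const,
            Finset.card_range, nsmul_eq_mul]
          rw [Finset.sum_congr rfl (g := fun _ => (4 : ℝ)) (fun k hk => by rw [if_pos hk])]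
          simp
          ring
  -- first moment on E
  have hintE : ∫ x in E, g x ∂μ = ∑ k ∈ Finset.range N, (μ.real (E ∩ G k) - c * μ.real E) := by
    simp only [g]
    have i1 : ∀ k, IntegrableOn (fun x => ind01 (G k) x - c) E μ := fun k =>
      ((ind01_integrable (hG k)).sub (integrable_const c)).integrableOn
    rw [integral_finsetSum _ (fun k _ => i1 k)]
    apply Finset.sum_congr rfl
    intro k _
    rw [integral_sub (ind01_integrable (hG k)).integrableOn (integrable_const c),
      ind01_integral (hG k)]
    simp [measureReal_restrict_apply (hG k), Set.inter_comm, mul_comm]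
  have hlow : N * (|m - c * μ.real E| - ε) ≤ |∫ x in E, g x ∂μ| := by
    have e : (∑ k ∈ Finset.range N, (μ.real (E ∩ G k) - c * μ.real E))
        = N * (m - c * μ.real E) + ∑ k ∈ Finset.range N, (μ.real (E ∩ G k) - m) := by
      simp only [Finset.sum_sub_distrib, Finset.sum_const, Finset.card_range, nsmul_eq_mul]
      ring
    have e2 : |∑ k ∈ Finset.range N, (μ.real (E ∩ G k) - m)| ≤ N * ε := by
      calc _ ≤ ∑ k ∈ Finset.range N, |μ.real (E ∩ G k) - m| := Finset.abs_sum_le_sum_abs _ _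
        _ ≤ ∑ k ∈ Finset.range N, ε :=
          Finset.sum_le_sum fun k hk => h3 k (Finset.mem_range.1 hk)
        _ = N * ε := by simp
    rw [hintE, e]
    have e3 := abs_sub_abs_le_abs_add (N * (m - c * μ.real E))
      (∑ k ∈ Finset.range N, (μ.real (E ∩ G k) - m))
    rw [abs_mul, Nat.abs_cast] at e3
    linarith
  refine hlow.trans ?_
  apply Real.abs_le_sqrt
  refine le_trans ?_ hsq
  -- Cauchy-Schwarz
  have hcs : (∫ x in E, g x ∂μ) ^ 2 ≤ ∫ x, g x ^ 2 ∂μ := by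
    have hEi : Integrable (fun x => ind01 E x * g x) μ := by
      have : (fun x => ind01 E x * g x) = E.indicator g := by
        ext x; by_cases h : x ∈ E <;> simp [ind01, h]
      rw [this]; exact hgi.indicator hE
    have e : ∫ x in E, g x ∂μ = ∫ x, ind01 E x * g x ∂μ := by
      rw [← integral_indicator hE]
      congr 1
      ext x; by_cases h : x ∈ E <;> simp [ind01, h]
    set I := ∫ x in E, g x ∂μ with hI
    have hp : ∀ x, 2 * I * (ind01 E x * g x) - I ^ 2 ≤ g x ^ 2 := by
      intro x
      have := ind01_bound E x
      have e0 : ind01 E x * ind01 E x = ind01 E x := by rw [ind01_mul, Set.inter_self]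
      have hz : 0 ≤ (g x) ^ 2 * (1 - ind01 E x) := mul_nonneg (sq_nonneg _) (by linarith)
      nlinarith [sq_nonneg (ind01 E x * g x - I)]
    have := integral_mono (μ := μ) ((hEi.const_mul (2 * I)).sub (integrable_const (I ^ 2))) hg2i hp
    simp only [Pi.sub_apply] at this
    rw [integral_sub (hEi.const_mul (2 * I)) (integrable_const (I ^ 2)), integral_const_mul,
      ← e] at this
    simp at this
    nlinarith
  exact hcs

/-! ### The induction -/

theorem abs_real_iInter_sub_le {X ι : Type*} [MeasurableSpace X] {μ : Measure X}
    [IsProbabilityMeasure μ] (S : Finset ι) (P Q : ι → Set X)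
    (hP : ∀ i, MeasurableSet (P i)) (hQ : ∀ i, MeasurableSet (Q i)) :
    |μ.real (⋂ i ∈ S, P i) - μ.real (⋂ i ∈ S, Q i)| ≤ ∑ i ∈ S, μ.real (symmDiff (P i) (Q i)) := by
  have hPm : MeasurableSet (⋂ i ∈ S, P i) := S.measurableSet_biInter fun i _ => hP i
  have hQm : MeasurableSet (⋂ i ∈ S, Q i) := S.measurableSet_biInter fun i _ => hQ i
  calc _ ≤ μ.real (symmDiff (⋂ i ∈ S, P i) (⋂ i ∈ S, Q i)) :=
        abs_measureReal_sub_le_measureReal_symmDiff hPm.nullMeasurableSet hQm.nullMeasurableSet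
    _ ≤ μ.real (⋃ i ∈ S, symmDiff (P i) (Q i)) := by
        apply measureReal_mono _ (measure_ne_top _ _)
        intro x hx
        simp only [Set.mem_symmDiff, Set.mem_iInter, Set.mem_iUnion] at hx ⊢
        rcases hx with ⟨h1, h2⟩ | ⟨h1, h2⟩
        · push Not at h2
          obtain ⟨i, hi, h⟩ := h2
          exact ⟨i, hi, Or.inl ⟨h1 i hi, h⟩⟩
        · push Not at h2
          obtain ⟨i, hi, h⟩ := h2
          exact ⟨i, hi, Or.inr ⟨h1 i hi, h⟩⟩
    _ ≤ _ := measureReal_biUnion_finset_le _ _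

theorem H3.comm_identity (t t0 σ w : ℝ) :
    H3.bc (-σ, -t0 * σ) * H3.A t = H3.A t * H3.C w * H3.bc (-σ, σ * (t - t0) - w) := by
  ext <;> simp [H3.bc, H3.A, H3.C]
  ring

/-- A sequence of times along which the central translates become pairwise independent. -/
theorem H3System.exists_times (s : H3System) [IsProbabilityMeasure s.μ]
    (hwm : s.CentralWeaklyMixing) {ι : Type*} (J : Finset ι) (θ : ι → ℝ)
    (hθ : ∀ j ∈ J, θ j ≠ 0) (A : ι → Set s.X) (hA : ∀ i, MeasurableSet (A i))
    (δ : ℝ) (hδ : 0 < δ) :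
    ∃ r : ℕ → ℝ, ∀ k l, k ≠ l →
      |∏ j ∈ J, s.μ.real (s.pre (H3.C (r k * θ j)) (A j) ∩ s.pre (H3.C (r l * θ j)) (A j))
        - (∏ j ∈ J, s.μ.real (A j)) ^ 2| < δ := by
  have hcont : Continuous fun v : J → ℝ => ∏ j, v j := by fun_prop
  obtain ⟨η, hη, hball⟩ := Metric.continuous_iff.1 hcont
    (fun j : J => s.μ.real (A j) * s.μ.real (A j)) δ hδ
  have hgen := exists_seq_of_forall_finset_exists (fun _ : ℝ => True)
    (fun x y : ℝ => |∏ j ∈ J, s.μ.real (s.pre (H3.C (x * θ j)) (A j) ∩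
      s.pre (H3.C (y * θ j)) (A j)) - (∏ j ∈ J, s.μ.real (A j)) ^ 2| < δ) ?_
  · obtain ⟨r, -, hr⟩ := hgen
    refine ⟨r, fun k l hkl => ?_⟩
    rcases lt_or_gt_of_ne hkl with h | h
    · exact hr k l h
    · have := hr l k h
      simp only [Set.inter_comm (s.pre (H3.C (r k * θ _)) _)]
      exact this
  · intro F _
    obtain ⟨u, hu⟩ := s.weak_mixing_key hwm (κ := J × F) (fun k => θ k.1)
      (fun k => hθ k.1 k.1.2) (fun k => A k.1) (fun k => s.pre (H3.C (k.2 * θ k.1)) (A k.1))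
      (fun k => hA _) (fun k => s.pre_meas _ (hA _)) η hη
    refine ⟨u, trivial, fun x hx => ?_⟩
    have h1 := hball (fun j : J => s.μ.real (s.pre (H3.C (x * θ j)) (A j) ∩
      s.pre (H3.C (u * θ j)) (A j))) (by
        rw [dist_pi_lt_iff hη]
        intro j
        have := hu (j, ⟨x, hx⟩)
        simp only [s.real_pre _ (hA _)] at this
        rw [Real.dist_eq]
        exact this)
    rw [Real.dist_eq, Finset.prod_mul_distrib] at h1
    rw [← Finset.prod_coe_sort J, ← Finset.prod_coe_sort J (fun j => s.μ.real (A j)), sq]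
    exact h1

theorem H3System.main_induction (s : H3System) (hstd : s.IsStdProb)
    (hwm : s.CentralWeaklyMixing) {ι : Type*} (U : Ultrafilter ℕ) (t : ℕ → ι → ℝ)
    (ht : ∀ i j, i ≠ j → Tendsto (fun n => |t n i - t n j|) U atTop) (S : Finset ι) :
    ∀ A : ι → Set s.X, (∀ i, MeasurableSet (A i)) →
      Tendsto (fun n => s.μ.real (⋂ i ∈ S, s.pre (H3.A (t n i)) (A i))) U
        (𝓝 (∏ i ∈ S, s.μ.real (A i))) := by
  classical
  have hprob : IsProbabilityMeasure s.μ := hstd.2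
  induction S using Finset.strongInduction with
  | H S ih =>
  intro A hA
  rcases S.eq_empty_or_nonempty with rfl | ⟨i0, hi0⟩
  · simp
  rcases (S.erase i0).eq_empty_or_nonempty with hR | hR
  · have hS : S = {i0} := by
      rw [← Finset.insert_erase hi0, hR]; rfl
    subst hS
    simp [s.real_pre _ (hA _)]
  -- the farthest index
  obtain ⟨j0, hj0R, hj0⟩ : ∃ j ∈ S.erase i0, ∀ᶠ n in (U : Filter ℕ), ∀ i ∈ S.erase i0,
      |t n i - t n i0| ≤ |t n j - t n i0| := by
    by_contra hcon
    have h1 : ∀ j ∈ S.erase i0, ∀ᶠ n in (U : Filter ℕ), ¬ ∀ i ∈ S.erase i0,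
        |t n i - t n i0| ≤ |t n j - t n i0| := by
      intro j hj
      apply Ultrafilter.eventually_not.2
      exact fun h => hcon ⟨j, hj, h⟩
    have h2 := (eventually_all_finset (S.erase i0)).2 h1
    obtain ⟨n, hn⟩ := h2.exists
    obtain ⟨j, hj, hmax⟩ := Finset.exists_max_image (S.erase i0) (fun i => |t n i - t n i0|) hR
    exact hn j hj hmax
  have hj0S : j0 ∈ S := Finset.mem_of_mem_erase hj0R
  have hne : j0 ≠ i0 := Finset.ne_of_mem_erase hj0R
  set D : ℕ → ℝ := fun n => t n j0 - t n i0 with hD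
  have hDinf : Tendsto (fun n => |D n|) U atTop := ht j0 i0 hne
  have hDne : ∀ᶠ n in (U : Filter ℕ), D n ≠ 0 := by
    filter_upwards [hDinf.eventually_gt_atTop 0] with n hn
    exact abs_pos.1 hn
  have hDinv : Tendsto (fun n => (D n)⁻¹) U (𝓝 0) := by
    rw [tendsto_zero_iff_abs_tendsto_zero]
    have := tendsto_inv_atTop_zero.comp hDinf
    refine this.congr fun n => ?_
    simp [abs_inv]
  have hθex : ∀ i, ∃ θ : ℝ, i ∈ S → Tendsto (fun n => (t n i - t n i0) / D n) U (𝓝 θ) := by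
    intro i
    by_cases hi : i ∈ S
    · have hb : ∀ᶠ n in (U : Filter ℕ), (t n i - t n i0) / D n ∈ Set.Icc (-1 : ℝ) 1 := by
        filter_upwards [hj0, hDne] with n h1 h2
        rw [Set.mem_Icc, ← abs_le, abs_div, div_le_one (abs_pos.2 h2)]
        by_cases hii : i = i0
        · rw [hii]; simp
        · exact h1 i (Finset.mem_erase.2 ⟨hii, hi⟩)
      obtain ⟨θ, -, hθ⟩ := isCompact_Icc.ultrafilter_le_nhds
        (U.map fun n => (t n i - t n i0) / D n) (le_principal_iff.2 hb)
      exact ⟨θ, fun _ => hθ⟩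
    · exact ⟨0, fun h => absurd h hi⟩
  choose θ hθ using hθex
  have hθi0 : θ i0 = 0 := by
    refine tendsto_nhds_unique (hθ i0 hi0) ?_
    simp
  have hθj0 : θ j0 = 1 := by
    refine tendsto_nhds_unique (hθ j0 hj0S) ?_
    refine tendsto_const_nhds.congr' ?_
    filter_upwards [hDne] with n hn
    exact (div_self hn).symm
  set I := S.filter fun i => θ i = 0 with hI
  set J := S.filter fun i => ¬ θ i = 0 with hJ
  have hIS : I ⊂ S := by
    refine Finset.filter_ssubset.2 ⟨j0, hj0S, ?_⟩
    rw [hθj0]; norm_num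
  have hJS : J ⊂ S := by
    refine Finset.filter_ssubset.2 ⟨i0, hi0, ?_⟩
    simp [hθi0]
  set M : ℕ → ℝ := fun n => s.μ.real (⋂ i ∈ S, s.pre (H3.A (t n i)) (A i)) with hM
  set E : ℕ → Set s.X := fun n => ⋂ i ∈ I, s.pre (H3.A (t n i)) (A i) with hE
  set G : ℝ → ℕ → Set s.X := fun r n =>
    ⋂ j ∈ J, s.pre (H3.A (t n j)) (s.pre (H3.C (r * θ j)) (A j)) with hG
  have hEm : ∀ n, MeasurableSet (E n) := fun n =>
    I.measurableSet_biInter fun i _ => s.pre_meas _ (hA i)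
  have hGm : ∀ r n, MeasurableSet (G r n) := fun r n =>
    J.measurableSet_biInter fun i _ => s.pre_meas _ (s.pre_meas _ (hA i))
  have hEG : ∀ r n, E n ∩ G r n
      = ⋂ i ∈ S, s.pre (H3.A (t n i)) (s.pre (H3.C (r * θ i)) (A i)) := by
    intro r n
    have hC0 : H3.C 0 = 1 := rfl
    ext x
    simp only [hE, hG, hI, hJ, Set.mem_inter_iff, Set.mem_iInter, Finset.mem_filter]
    constructor
    · rintro ⟨h1, h2⟩ i hi
      by_cases h0 : θ i = 0
      · rw [h0, mul_zero, hC0, s.pre_one_s12]; exact h1 i ⟨hi, h0⟩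
      · exact h2 i ⟨hi, h0⟩
    · intro h
      refine ⟨fun i hi => ?_, fun i hi => h i hi.1⟩
      have := h i hi.1
      rwa [hi.2, mul_zero, hC0, s.pre_one_s12] at this
  -- near invariance
  have step1 : ∀ r : ℝ, Tendsto (fun n => |s.μ.real (E n ∩ G r n) - M n|) U (𝓝 0) := by
    intro r
    have hb : ∀ n, |s.μ.real (E n ∩ G r n) - M n| ≤ ∑ i ∈ S, s.μ.real (symmDiff
        (s.pre (H3.bc (-(r * (D n)⁻¹), (r * (D n)⁻¹) * (t n i - t n i0) - r * θ i)) (A i))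
        (A i)) := by
      intro n
      set σ := r * (D n)⁻¹ with hσ
      have e1 : M n = s.μ.real (⋂ i ∈ S, s.pre (H3.A (t n i) * H3.C (r * θ i))
          (s.pre (H3.bc (-σ, σ * (t n i - t n i0) - r * θ i)) (A i))) := by
        rw [hM]
        have hm : MeasurableSet (⋂ i ∈ S, s.pre (H3.A (t n i)) (A i)) :=
          S.measurableSet_biInter fun i _ => s.pre_meas _ (hA i)
        change s.μ.real (⋂ i ∈ S, s.pre (H3.A (t n i)) (A i)) = _
        rw [← s.real_pre (H3.bc (-σ, -(t n i0) * σ)) hm]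
        congr 1
        have : ∀ i, s.pre (H3.A (t n i) * H3.C (r * θ i))
            (s.pre (H3.bc (-σ, σ * (t n i - t n i0) - r * θ i)) (A i))
            = s.pre (H3.bc (-σ, -(t n i0) * σ)) (s.pre (H3.A (t n i)) (A i)) := by
          intro i
          rw [← s.pre_mul_s12, ← s.pre_mul_s12, H3.comm_identity]
        simp only [this]
        ext x
        simp [H3System.pre]
      rw [e1, hEG, abs_sub_comm]
      refine (abs_real_iInter_sub_le S _ _ (fun i => s.pre_meas _ (s.pre_meas _ (hA i)))
        (fun i => s.pre_meas _ (s.pre_meas _ (hA i)))).trans (le_of_eq ?_)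
      apply Finset.sum_congr rfl
      intro i _
      rw [← s.pre_mul_s12 (H3.A (t n i)) (H3.C (r * θ i)) (A i), ← s.pre_symmDiff,
        s.real_pre _ ((s.pre_meas _ (hA i)).symmDiff (hA i))]
    refine squeeze_zero (fun n => abs_nonneg _) hb ?_
    rw [← Finset.sum_const_zero (s := S)]
    refine tendsto_finsetSum _ fun i hi => ?_
    refine (s.tendsto_bc hstd (hA i)).comp ?_
    have h1 : Tendsto (fun n => -(r * (D n)⁻¹)) U (𝓝 0) := by
      simpa using (hDinv.const_mul r).neg
    have h2 : Tendsto (fun n => (r * (D n)⁻¹) * (t n i - t n i0) - r * θ i) U (𝓝 0) := by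
      have := ((hθ i hi).const_mul r).sub_const (r * θ i)
      rw [sub_self] at this
      refine this.congr fun n => ?_
      ring
    exact h1.prodMk_nhds h2
  set c := ∏ j ∈ J, s.μ.real (A j) with hc
  have hc0 : 0 ≤ c := Finset.prod_nonneg fun _ _ => measureReal_nonneg
  have hc1 : c ≤ 1 := Finset.prod_le_one (fun _ _ => measureReal_nonneg)
    fun _ _ => measureReal_le_one
  have step2 : Tendsto (fun n => M n - c * s.μ.real (E n)) U (𝓝 0) := by
    rw [Metric.tendsto_nhds]
    intro ε hε
    set δ := min (ε / 2) (ε ^ 2 / 24) with hδdef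
    have hδ : 0 < δ := by positivity
    have hδ1 : δ ≤ ε / 2 := min_le_left _ _
    have hδ2 : δ ≤ ε ^ 2 / 24 := min_le_right _ _
    obtain ⟨N, hN⟩ := exists_nat_gt (32 / ε ^ 2)
    have hNpos : (0 : ℝ) < N := lt_of_le_of_lt (by positivity) hN
    obtain ⟨r, hr⟩ := s.exists_times hwm J θ (fun j hj => (Finset.mem_filter.1 hj).2) A hA
      (δ / 2) (by positivity)
    have ev1 : ∀ᶠ n in (U : Filter ℕ), ∀ k ∈ Finset.range N,
        |s.μ.real (G (r k) n) - c| ≤ δ := by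
      refine (eventually_all_finset _).2 fun k _ => ?_
      have := ih J hJS (fun j => s.pre (H3.C (r k * θ j)) (A j)) (fun j => s.pre_meas _ (hA j))
      simp only [s.real_pre _ (hA _)] at this
      filter_upwards [Metric.tendsto_nhds.1 this δ hδ] with n hn
      exact hn.le
    have ev2 : ∀ᶠ n in (U : Filter ℕ), ∀ k ∈ Finset.range N, ∀ l ∈ Finset.range N, k ≠ l →
        |s.μ.real (G (r k) n ∩ G (r l) n) - c ^ 2| ≤ δ := by
      refine (eventually_all_finset _).2 fun k _ => (eventually_all_finset _).2 fun l _ => ?_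
      by_cases hkl : k = l
      · filter_upwards with n h using absurd hkl h
      have h1 := ih J hJS (fun j => s.pre (H3.C (r k * θ j)) (A j) ∩ s.pre (H3.C (r l * θ j)) (A j))
        (fun j => (s.pre_meas _ (hA j)).inter (s.pre_meas _ (hA j)))
      filter_upwards [Metric.tendsto_nhds.1 h1 (δ / 2) (by positivity)] with n hn _
      have e : G (r k) n ∩ G (r l) n = ⋂ j ∈ J, s.pre (H3.A (t n j))
          (s.pre (H3.C (r k * θ j)) (A j) ∩ s.pre (H3.C (r l * θ j)) (A j)) := by
        simp only [hG, s.pre_inter, Set.iInter_inter_distrib]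
      rw [e]
      rw [Real.dist_eq] at hn
      have h2 := hr k l hkl
      have h3 := abs_add_le (s.μ.real (⋂ j ∈ J, s.pre (H3.A (t n j))
          (s.pre (H3.C (r k * θ j)) (A j) ∩ s.pre (H3.C (r l * θ j)) (A j)))
          - ∏ j ∈ J, s.μ.real (s.pre (H3.C (r k * θ j)) (A j) ∩ s.pre (H3.C (r l * θ j)) (A j)))
          (∏ j ∈ J, s.μ.real (s.pre (H3.C (r k * θ j)) (A j) ∩ s.pre (H3.C (r l * θ j)) (A j))
            - c ^ 2)
      rw [sub_add_sub_cancel] at h3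
      linarith
    have ev3 : ∀ᶠ n in (U : Filter ℕ), ∀ k ∈ Finset.range N,
        |s.μ.real (E n ∩ G (r k) n) - M n| ≤ δ := by
      refine (eventually_all_finset _).2 fun k _ => ?_
      filter_upwards [(step1 (r k)).eventually (gt_mem_nhds hδ)] with n hn
      exact le_of_lt hn
    filter_upwards [ev1, ev2, ev3] with n h1 h2 h3
    rw [Real.dist_eq, sub_zero]
    by_contra hcon
    push Not at hcon
    have hv := vdc_aux (hEm n) N (fun k => G (r k) n) (fun k => hGm _ n) c (M n) δ hδ.le hc0 hc1
      (fun k hk => h1 k (Finset.mem_range.2 hk))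
      (fun k hk l hl => h2 k (Finset.mem_range.2 hk) l (Finset.mem_range.2 hl))
      (fun k hk => h3 k (Finset.mem_range.2 hk))
    have hv1 : N * (ε / 2) ≤ Real.sqrt (N * 4 + N ^ 2 * (3 * δ)) := by
      refine le_trans ?_ hv
      apply mul_le_mul_of_nonneg_left _ hNpos.le
      linarith
    have hv2 := (Real.le_sqrt (by positivity) (by positivity)).1 hv1
    rw [div_lt_iff₀ (by positivity)] at hN
    have hv3 : (N : ℝ) ^ 2 * (3 * δ) ≤ N ^ 2 * (ε ^ 2 / 8) := by
      apply mul_le_mul_of_nonneg_left _ (by positivity)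
      linarith
    have hv4 : (N : ℝ) * (N * ε ^ 2) ≤ N * 32 := by nlinarith
    have := le_of_mul_le_mul_left hv4 hNpos
    linarith
  have hEl := ih I hIS A hA
  have hfin := step2.add (hEl.const_mul c)
  have hprod : 0 + c * ∏ i ∈ I, s.μ.real (A i) = ∏ i ∈ S, s.μ.real (A i) := by
    rw [zero_add, hc, mul_comm, hI, hJ, Finset.prod_filter_mul_prod_filter_not]
  rw [hprod] at hfin
  refine hfin.congr fun n => ?_
  simp [hE]

/-! ### Conclusion -/

theorem H3System.a_mixing (s : H3System) (hstd : s.IsStdProb)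
    (hwm : s.CentralWeaklyMixing) (k : ℕ) :
    FlowMixingOfOrderFam s.μ (fun t => s.T (H3.A t)) k := by
  intro ε hε A hA
  by_contra hcon
  push Not at hcon
  choose t ht1 ht2 using fun n : ℕ => hcon (Metric.closedBall 0 n) (isCompact_closedBall 0 _)
  let U : Ultrafilter ℕ := hyperfilter ℕ
  have hU : (U : Filter ℕ) ≤ atTop := Nat.hyperfilter_le_atTop
  have hlim := s.main_induction hstd hwm U t (by
    intro i j hij
    refine (tendsto_atTop_mono ?_ tendsto_natCast_atTop_atTop).mono_left hU
    intro n
    have := ht1 n i j hij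
    rw [mem_closedBall_zero_iff, Real.norm_eq_abs, not_le] at this
    exact this.le) Finset.univ A hA
  obtain ⟨n, hn⟩ := (Metric.tendsto_nhds.1 hlim ε hε).exists
  rw [Real.dist_eq] at hn
  have h2 := ht2 n
  simp only [s.image_eq_pre] at h2
  simp only [Finset.mem_univ, Set.iInter_true] at hn
  exact absurd hn (not_lt.2 h2)

theorem H3.flip_mul (g h : H3) : (g * h).flip = g.flip * h.flip := by
  ext <;> simp [H3.flip]
  ring

/-- The system twisted by the flip automorphism. -/
def H3System.flipped (s : H3System) : H3System where
  X := s.X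
  ms := s.ms
  μ := s.μ
  T g := s.T g.flip
  t_one x := by
    have : (1 : H3).flip = 1 := by ext <;> simp [H3.flip]
    rw [this, s.t_one]
  t_mul g h x := by rw [H3.flip_mul, s.t_mul]
  t_meas := by
    have ht : Measurable H3.toProd := comap_measurable _
    have ha : Measurable H3.a := measurable_fst.comp ht
    have hb : Measurable H3.b := (measurable_fst.comp measurable_snd).comp ht
    have hc : Measurable H3.c := (measurable_snd.comp measurable_snd).comp ht
    have hf : Measurable H3.flip := H3.measurable_of_s12 hb ha ((ha.mul hb).sub hc)
    exact s.t_meas.comp ((hf.comp measurable_fst).prodMk measurable_snd)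
  t_mp g := s.t_mp g.flip

theorem H3System.b_mixing (s : H3System) (hstd : s.IsStdProb)
    (hwm : s.CentralWeaklyMixing) (k : ℕ) :
    FlowMixingOfOrderFam s.μ (fun t => s.T (H3.B t)) k := by
  have h := s.flipped.a_mixing hstd (by
    intro A hA hinv
    apply hwm A hA
    intro t
    have h1 := hinv (-t)
    have h2 : (H3.C (-t)).flip = H3.C t := by ext <;> simp [H3.flip, H3.C]
    change (fun p : s.X × s.X => (s.T (H3.C (-t)).flip p.1, s.T (H3.C (-t)).flip p.2)) ⁻¹' A = A
      at h1
    rw [h2] at h1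
    exact h1) k
  have e : ∀ t, (H3.A t).flip = H3.B t := by intro t; ext <;> simp [H3.flip, H3.A, H3.B]
  change FlowMixingOfOrderFam s.μ (fun t => s.T (H3.A t).flip) k at h
  simpa only [e] using h

/-- **Remark 3.9(ii).** Let `T` be a measure-preserving action of `H₃(ℝ)` on a standard
probability space. If the central flow `(T_{c(t)})_{t∈ℝ}` is weakly mixing, then for every
`k ≥ 1` the flows `(T_{a(t)})_{t∈ℝ}` and `(T_{b(t)})_{t∈ℝ}` are mixing of order `k`. -/
theorem ab_flows_mixing_all_orders_of_central_weaklyMixing (s : H3System)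
    (hstd : s.IsStdProb) (hwm : s.CentralWeaklyMixing) :
    ∀ k : ℕ, 1 ≤ k →
      FlowMixingOfOrderFam s.μ (fun t => s.T (H3.A t)) k ∧
      FlowMixingOfOrderFam s.μ (fun t => s.T (H3.B t)) k := by
  intro k _
  exact ⟨s.a_mixing hstd hwm k, s.b_mixing hstd hwm k⟩

end Statement
end
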